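/- Let n ≥ 2 be a natural number and let U ⊆ (ℝ/ℤ)^n be a 2-dimensional proper subtorus. Then there exist N ∈ ℤ_{≥0} and positive rational numbers α₁,…,α_N, β₁,…,β_N such that the set 𝒮₁(U) has finite symmetric difference with the set ⋃_{i=1}^N { D(U) + 1/(αᵢ·s + βᵢ) : s ∈ ℤ, s ≥ 0 }. -/

import Mathlib

noncomputable section

abbrev Torus (n : ℕ) : Type := Fin n → AddCircle (1 : ℝ)

def torusProj {n : ℕ} (x : Fin n → ℝ) : Torus n := fun i => (x i : AddCircle (1 : ℝ))

def spanTorus {n k : ℕ} (v : Fin k → Fin n → ℤ) : Set (Torus n) :=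
  {p | ∃ t : Fin k → ℝ, p = torusProj fun i => ∑ j, t j * (v j i : ℝ)}

def IsSubtorus {n : ℕ} (k : ℕ) (S : Set (Torus n)) : Prop :=
  ∃ v : Fin k → Fin n → ℤ,
    LinearIndependent ℝ (fun j : Fin k => fun i : Fin n => (v j i : ℝ)) ∧ S = spanTorus v

def IsProperSub {n : ℕ} (S : Set (Torus n)) : Prop :=
  ¬ S ⊆ ⋃ i : Fin n, {x : Torus n | x i = 0}

def DVal {n : ℕ} (S : Set (Torus n)) : ℝ :=
  sInf ((fun x : Torus n => ⨆ i, dist (x i) ((1 / 2 : ℝ) : AddCircle (1 : ℝ))) '' S)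

def relSpec1 {n : ℕ} (U : Set (Torus n)) : Set ℝ :=
  {d | ∃ T : Set (Torus n), IsSubtorus 1 T ∧ IsProperSub T ∧ T ⊆ U ∧ d = DVal T}

def Spec (k n : ℕ) : Set ℝ :=
  {d | ∃ T : Set (Torus n), IsSubtorus k T ∧ IsProperSub T ∧ d = DVal T}

def progSet (d : ℝ) (α β : ℚ) : Set ℝ :=
  {x | ∃ s : ℕ, x = d + 1 / ((α : ℝ) * s + (β : ℝ))}

/-!
The proper lines in the subtorus spanned by `v` are the `⟨a⟩` with `a = ∑ j, w j • v j` for a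
primitive `w ∈ ℤ²` such that all `a i ≠ 0`. The distance of `⟨a⟩` to `(1/2, …, 1/2)` is at most `r`
if and only if, for some half-integral centres, the intervals of times at which the coordinates are
`r`-close to these centres have a common point, that is, meet pairwise. Modulo `ℤ v₀ + ℤ v₁`
finitely many centres and one free integer `c` remain, so on each of the finitely many sign chambers
the condition becomes a system of inequalities between linear forms in `(w, c)` and `r` times linear
forms in `w`.

The minimum `D` of the distance on the whole subtorus is rational, and a line through `w` is
`O(1 / |w|)`-dense in it, so `D(⟨a⟩) - D` equals `e / (d u(w))` with a linear form `u`, a constant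
`d` and an integer `e` taking only finitely many values, and the `w` belonging to given `e` and `u`
form a semilinear set. It remains to see that the values of a linear form `u` at the primitive
vectors of a linear set are eventually closed under adding a suitable period `P`. To pass from a
primitive `w` to a primitive vector of value `V = u(w) + P`, add a multiple of a generator `p` that
occurs often in `w`, then a multiple `s z` of a combination `z ∈ ker u` of `p` and another
generator. Only prime divisors of `V` can obstruct primitivity, so a sieve finds a suitable
`s ≤ 4 ^ ω(V)`, and there is room for it since `4 ^ ω(V) = o(V)`. If all such `z` vanish, no
correction is needed: a prime dividing both `w + h p` and `h` divides `w`, and a prime dividing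
`w + h p` divides `u(p) a - u(a) p` with `a` the base point, so `h` need only be a multiple of the
content of this nonzero vector.
-/

section Sieve

open Finset

variable {ι : Type*} {m : ι → ℕ} {S : Finset ι}

lemma exists_forall_modEq_iff_modEq_prod (r : ι → ℕ) (hm : ∀ i ∈ S, m i ≠ 0)
    (hco : (S : Set ι).Pairwise fun i j => (m i).Coprime (m j)) :
    ∃ x, ∀ s : ℕ, (∀ i ∈ S, s ≡ r i [MOD m i]) ↔ s ≡ x [MOD ∏ i ∈ S, m i] := by
  obtain ⟨x, hx⟩ := Nat.chineseRemainderOfFinset r m S hm hco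
  have hlist : S.toList.Pairwise fun i j => (m i).Coprime (m j) :=
    S.nodup_toList.pairwise_of_forall_ne fun i hi j hj =>
      hco (by simpa using hi) (by simpa using hj)
  refine ⟨x, fun s => ?_⟩
  rw [← Finset.prod_map_toList, Nat.modEq_list_map_prod_iff hlist]
  simp only [mem_toList]
  exact forall₂_congr fun i hi => ⟨fun h => h.trans (hx i hi).symm, fun h => h.trans (hx i hi)⟩

lemma abs_card_modEq_sub_div_le (N r : ℕ) {q : ℕ} (hq : 0 < q) :
    |(#{s ∈ range N | s ≡ r [MOD q]} : ℝ) - N / q| ≤ 1 := by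
  rw [← Nat.count_eq_card_filter_range, Nat.count_modEq_card N hq]
  have hdiv : (N / q : ℝ) - 1 < (N / q : ℕ) := by
    rw [sub_lt_iff_lt_add, ← Nat.floor_div_eq_div (K := ℝ)]
    exact Nat.lt_floor_add_one _
  have hdiv' : ((N / q : ℕ) : ℝ) ≤ N / q := Nat.cast_div_le
  rw [abs_le]
  split_ifs <;> push_cast <;> constructor <;> linarith

lemma abs_card_forall_modEq_sub_div_le (N : ℕ) (r : ι → ℕ) (hm : ∀ i ∈ S, m i ≠ 0)
    (hco : (S : Set ι).Pairwise fun i j => (m i).Coprime (m j)) :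
    |(#{s ∈ range N | ∀ i ∈ S, s ≡ r i [MOD m i]} : ℝ) - N * ∏ i ∈ S, (m i : ℝ)⁻¹| ≤ 1 := by
  obtain ⟨x, hx⟩ := exists_forall_modEq_iff_modEq_prod r hm hco
  have := abs_card_modEq_sub_div_le N x (prod_pos fun i hi => Nat.pos_of_ne_zero (hm i hi))
  simpa only [hx, Nat.cast_prod, div_eq_mul_inv, prod_inv_distrib] using this

lemma card_forall_not_eq_sum_powerset {α : Type*} (A : Finset α) (P : ι → α → Prop)
    [∀ i a, Decidable (P i a)] :
    (#{a ∈ A | ∀ i ∈ S, ¬ P i a} : ℝ) =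
      ∑ T ∈ S.powerset, (-1) ^ #T * (#{a ∈ A | ∀ i ∈ T, P i a} : ℝ) := by
  classical
  have hprod (a : α) : (if ∀ i ∈ S, ¬ P i a then (1 : ℝ) else 0) =
      ∑ T ∈ S.powerset, (-1) ^ #T * if ∀ i ∈ T, P i a then (1 : ℝ) else 0 := by
    simp_rw [← prod_boole, ← prod_const, ← prod_mul_distrib, ← prod_one_add]
    exact prod_congr rfl fun i _ => by split_ifs <;> simp_all
  simp_rw [card_filter, Nat.cast_sum, Nat.cast_ite, Nat.cast_one, Nat.cast_zero, hprod, mul_sum]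
  exact sum_comm

lemma abs_card_avoid_sub_le (N : ℕ) (r : ι → ℕ) (hm : ∀ i ∈ S, m i ≠ 0)
    (hco : (S : Set ι).Pairwise fun i j => (m i).Coprime (m j)) :
    |(#{s ∈ range N | ∀ i ∈ S, ¬ s ≡ r i [MOD m i]} : ℝ) - N * ∏ i ∈ S, (1 - (m i : ℝ)⁻¹)| ≤
      2 ^ #S := by
  classical
  have hexpand : ∏ i ∈ S, (1 - (m i : ℝ)⁻¹) =
      ∑ T ∈ S.powerset, (-1) ^ #T * ∏ i ∈ T, (m i : ℝ)⁻¹ := by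
    simp_rw [sub_eq_add_neg, prod_one_add, prod_neg]
  have hterm (T : Finset ι) (hT : T ∈ S.powerset) :
      |(-1) ^ #T * (#{s ∈ range N | ∀ i ∈ T, s ≡ r i [MOD m i]} : ℝ) -
        N * ((-1) ^ #T * ∏ i ∈ T, (m i : ℝ)⁻¹)| ≤ 1 := by
    have hTS := mem_powerset.1 hT
    rw [mul_left_comm, ← mul_sub, abs_mul, abs_neg_one_pow, one_mul]
    exact abs_card_forall_modEq_sub_div_le N r (fun i hi => hm i (hTS hi))
      (hco.mono (coe_subset.2 hTS))
  rw [card_forall_not_eq_sum_powerset, hexpand, mul_sum, ← sum_sub_distrib]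
  refine (abs_sum_le_sum_abs _ _).trans ((sum_le_card_nsmul _ _ 1 hterm).trans_eq ?_)
  simp [card_powerset]

lemma exists_lt_forall_not_modEq {N : ℕ} (r : ι → ℕ) (hm : ∀ i ∈ S, 2 ≤ m i)
    (hco : (S : Set ι).Pairwise fun i j => (m i).Coprime (m j)) (hN : 4 ^ #S < N) :
    ∃ s < N, ∀ i ∈ S, ¬ s ≡ r i [MOD m i] := by
  by_contra! hall
  have hempty : #{s ∈ range N | ∀ i ∈ S, ¬ s ≡ r i [MOD m i]} = 0 := by
    simpa [filter_eq_empty_iff, Decidable.not_not] using hall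
  have hprod : (2⁻¹ : ℝ) ^ #S ≤ ∏ i ∈ S, (1 - (m i : ℝ)⁻¹) := by
    rw [← prod_const]
    refine prod_le_prod (fun _ _ => by positivity) fun i hi => ?_
    have := inv_anti₀ two_pos (show (2 : ℝ) ≤ m i by exact_mod_cast hm i hi)
    linarith
  have hbound := abs_card_avoid_sub_le N r (fun i hi => by have := hm i hi; omega) hco
  rw [hempty, Nat.cast_zero, zero_sub, abs_neg] at hbound
  have : (4 : ℝ) ^ #S * 2⁻¹ ^ #S < 2 ^ #S :=
    calc (4 : ℝ) ^ #S * 2⁻¹ ^ #S < N * 2⁻¹ ^ #S := by gcongr; exact_mod_cast hN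
      _ ≤ N * ∏ i ∈ S, (1 - (m i : ℝ)⁻¹) := by gcongr
      _ ≤ 2 ^ #S := (le_abs_self _).trans hbound
  rw [← mul_pow] at this
  norm_num at this

end Sieve

section OmegaBound

open Finset Filter Asymptotics

lemma pow_card_primeFactors_le (c : ℕ) (hc : 0 < c) {v : ℕ} (hv : v ≠ 0) :
    c ^ #v.primeFactors ≤ c ^ c * v := by
  have hlarge : c ^ #{p ∈ v.primeFactors | ¬ p < c} ≤ v :=
    calc c ^ #{p ∈ v.primeFactors | ¬ p < c}
        ≤ ∏ p ∈ v.primeFactors with ¬ p < c, p :=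
          pow_card_le_prod _ _ _ fun p hp => not_lt.1 (mem_filter.1 hp).2
      _ ≤ ∏ p ∈ v.primeFactors, p := prod_le_prod_of_subset_of_one_le' (filter_subset _ _)
          fun p hp _ => (Nat.prime_of_mem_primeFactors hp).one_le
      _ ≤ v := Nat.le_of_dvd (Nat.pos_of_ne_zero hv) (Nat.prod_primeFactors_dvd v)
  have hsmall : #{p ∈ v.primeFactors | p < c} ≤ c := by
    refine (card_le_card fun p hp => ?_).trans (card_range c).le
    exact mem_range.2 (mem_filter.1 hp).2
  rw [← card_filter_add_card_filter_not (s := v.primeFactors) (p := (· < c)), pow_add]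
  gcongr

lemma isLittleO_pow_card_primeFactors (c : ℕ) :
    (fun v : ℕ => (c : ℝ) ^ #v.primeFactors) =o[atTop] fun v : ℕ => (v : ℝ) := by
  have hO : (fun v : ℕ => ((c : ℝ) ^ #v.primeFactors) ^ 2) =O[atTop] fun v : ℕ => (v : ℝ) := by
    refine IsBigO.of_bound (((c + 1) ^ 2) ^ (c + 1) ^ 2 : ℕ) ?_
    filter_upwards [eventually_ne_atTop 0] with v hv
    rw [Real.norm_of_nonneg (by positivity), Real.norm_of_nonneg (by positivity), pow_right_comm]
    calc ((c : ℝ) ^ 2) ^ #v.primeFactors ≤ (((c + 1 : ℕ) : ℝ) ^ 2) ^ #v.primeFactors := by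
          gcongr; simp
      _ ≤ _ := by exact_mod_cast pow_card_primeFactors_le ((c + 1) ^ 2) (by positivity) hv
  have ho : (fun v : ℕ => (v : ℝ)) =o[atTop] fun v : ℕ => (v : ℝ) ^ 2 := by
    simpa [Function.comp_def] using
      (isLittleO_pow_pow_atTop_of_lt (𝕜 := ℝ) one_lt_two).comp_tendsto tendsto_natCast_atTop_atTop
  exact (hO.trans_isLittleO ho).of_pow two_ne_zero

end OmegaBound

section PrimitiveVectors

open Finset

variable {ι : Type*}

/-- The vector `u p • w - u w • p`, the linear combination of `w` and `p` killed by `u`. -/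
def eliminate (u : (ι → ℤ) →+ ℤ) (p : ι → ℤ) : (ι → ℤ) →+ (ι → ℤ) where
  toFun w := u p • w - u w • p
  map_zero' := by simp
  map_add' x y := by simp only [map_add, smul_add, add_smul]; abel

lemma eliminate_apply (u : (ι → ℤ) →+ ℤ) (p w : ι → ℤ) :
    eliminate u p w = u p • w - u w • p := rfl

lemma map_eliminate (u : (ι → ℤ) →+ ℤ) (p w : ι → ℤ) : u (eliminate u p w) = 0 := by
  rw [eliminate_apply, map_sub, map_zsmul, map_zsmul, smul_eq_mul, smul_eq_mul, mul_comm, sub_self]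

lemma exists_le_forall_prime_dvd_add_mul {V : ℕ} (hV : V ≠ 0) (b z : ι → ℤ) :
    ∃ s : ℕ, s ≤ 4 ^ #V.primeFactors ∧ ∀ p : ℕ, p.Prime → p ∣ V →
      (∀ i, (p : ℤ) ∣ b i + s * z i) → ∀ i, (p : ℤ) ∣ z i := by
  have hres (p : ℕ) : ∃ r : ℕ, p.Prime → (∃ i, ¬ (p : ℤ) ∣ z i) →
      ∀ s : ℕ, (∀ i, (p : ℤ) ∣ b i + s * z i) → s ≡ r [MOD p] := by
    by_cases h : p.Prime ∧ ∃ i, ¬ (p : ℤ) ∣ z i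
    · obtain ⟨hp, i, hi⟩ := h
      have : Fact p.Prime := ⟨hp⟩
      refine ⟨(-(b i : ZMod p) / z i).val, fun _ _ s hs => ?_⟩
      have hzi : (z i : ZMod p) ≠ 0 := by rwa [Ne, ZMod.intCast_zmod_eq_zero_iff_dvd]
      have hsi := (ZMod.intCast_zmod_eq_zero_iff_dvd _ p).2 (hs i)
      push_cast at hsi
      rw [← ZMod.natCast_eq_natCast_iff, ZMod.natCast_zmod_val, eq_div_iff hzi]
      linear_combination hsi
    · exact ⟨0, fun hp hi => absurd ⟨hp, hi⟩ h⟩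
  choose r hr using hres
  obtain ⟨s, hs, havoid⟩ := exists_lt_forall_not_modEq (m := id) r
    (fun p hp => (Nat.prime_of_mem_primeFactors hp).two_le)
    (fun p hp q hq => (Nat.coprime_primes (Nat.prime_of_mem_primeFactors hp)
      (Nat.prime_of_mem_primeFactors hq)).2)
    (Nat.lt_succ_self (4 ^ #V.primeFactors))
  refine ⟨s, Nat.le_of_lt_succ hs, fun p hp hpV hdvd => ?_⟩
  by_contra! hz
  exact havoid p (Nat.mem_primeFactors.2 ⟨hp, hpV, hV⟩) (hr p hp hz s hdvd)

variable [Fintype ι]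

/-- An integer vector is primitive if its coordinates have greatest common divisor `1`. -/
def IsPrimitive (w : ι → ℤ) : Prop := univ.gcd w = 1

lemma isPrimitive_iff_forall_prime {w : ι → ℤ} :
    IsPrimitive w ↔ ∀ p : ℕ, p.Prime → ∃ i, ¬ (p : ℤ) ∣ w i := by
  obtain ⟨g, hg⟩ := Int.eq_ofNat_of_zero_le
    (Int.nonneg_of_normalize_eq_self (univ.normalize_gcd (f := w)))
  have hdvd (p : ℕ) : p ∣ g ↔ ∀ i, (p : ℤ) ∣ w i := by
    rw [← Int.natCast_dvd_natCast, ← Int.ofNat_eq_natCast, ← hg, Finset.dvd_gcd_iff]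
    simp
  rw [IsPrimitive, hg, Nat.cast_eq_one, Nat.eq_one_iff_not_exists_prime_dvd]
  simp only [hdvd, not_forall]

lemma exists_isPrimitive_add_smul {u : (ι → ℤ) →+ ℤ} {w p z : ι → ℤ} {h : ℤ} {V : ℕ}
    (hw : IsPrimitive w) (hz : u z = 0) (hzh : univ.gcd z ∣ h) (hV : V ≠ 0)
    (huV : u (w + h • p) = V) :
    ∃ s : ℕ, s ≤ 4 ^ #V.primeFactors ∧ IsPrimitive (w + h • p + s • z) := by
  obtain ⟨s, hs, hsz⟩ := exists_le_forall_prime_dvd_add_mul hV (w + h • p) z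
  refine ⟨s, hs, isPrimitive_iff_forall_prime.2 fun q hq => ?_⟩
  by_contra! hdvd
  have hqV : (q : ℤ) ∣ V := by
    choose y hy using hdvd
    have hy' : w + h • p + s • z = (q : ℤ) • y := funext hy
    have := congrArg u hy'
    rw [map_add, huV, map_nsmul, hz, smul_zero, add_zero, map_zsmul] at this
    exact this ▸ dvd_mul_right _ _
  have hqz : ∀ i, (q : ℤ) ∣ z i := hsz q hq (Int.natCast_dvd_natCast.1 hqV) (by simpa using hdvd)
  have hqh : (q : ℤ) ∣ h := (dvd_gcd fun i _ => hqz i).trans hzh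
  obtain ⟨i, hi⟩ := isPrimitive_iff_forall_prime.1 hw q hq
  have hqw := hdvd i
  simp only [Pi.add_apply, Pi.smul_apply, smul_eq_mul, nsmul_eq_mul] at hqw
  exact hi <| (dvd_add_left (hqh.mul_right _)).1 <| (dvd_add_left ((hqz i).mul_left _)).1 hqw

lemma IsPrimitive.add_smul_of_gcd_eliminate_dvd {u : (ι → ℤ) →+ ℤ} {w p : ι → ℤ} {h : ℤ}
    (hw : IsPrimitive w) (hh : univ.gcd (eliminate u p w) ∣ h) : IsPrimitive (w + h • p) := by
  refine isPrimitive_iff_forall_prime.2 fun q hq => ?_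
  by_contra! hdvd
  have hinv : eliminate u p (w + h • p) = eliminate u p w := by
    have hp : eliminate u p p = 0 := sub_self _
    rw [map_add, map_zsmul, hp, smul_zero, add_zero]
  have hqz : ∀ i, (q : ℤ) ∣ eliminate u p w i := by
    choose y hy using hdvd
    have hy' : w + h • p = (q : ℤ) • y := funext hy
    intro i
    rw [← hinv, hy', map_zsmul]
    exact dvd_mul_right _ _
  have hqh : (q : ℤ) ∣ h := (dvd_gcd fun i _ => hqz i).trans hh
  obtain ⟨i, hi⟩ := isPrimitive_iff_forall_prime.1 hw q hq
  exact hi ((dvd_add_left (hqh.mul_right (p i))).1 (hdvd i))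

lemma IsPrimitive.map_dvd_of_eliminate_eq_zero {u : (ι → ℤ) →+ ℤ} {w p : ι → ℤ}
    (hw : IsPrimitive w) (h : eliminate u p w = 0) : u w ∣ u p := by
  have hdvd : u w ∣ univ.gcd fun i => u p * w i := dvd_gcd fun i _ => by
    have := congrFun h i
    simp only [eliminate_apply, Pi.sub_apply, Pi.smul_apply, smul_eq_mul, Pi.zero_apply,
      sub_eq_zero] at this
    exact this ▸ dvd_mul_right _ _
  rw [Finset.gcd_mul_left, hw, mul_one] at hdvd
  exact dvd_normalize_iff.1 hdvd

end PrimitiveVectors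

section LinearSets

open Finset Filter
open scoped Pointwise

/-- The linear set with base point `a` and periods `t`. -/
def linearSet {M : Type*} [AddCommMonoid M] (a : M) (t : Finset M) : Set M :=
  a +ᵥ (AddSubmonoid.closure (t : Set M) : Set M)

lemma add_nsmul_mem_linearSet {M : Type*} [AddCommMonoid M] {a p w : M} {t : Finset M}
    (hw : w ∈ linearSet a t) (hp : p ∈ t) (k : ℕ) :
    w + k • p ∈ linearSet a t := by
  obtain ⟨y, hy, rfl⟩ := hw
  exact ⟨y + k • p, add_mem hy (nsmul_mem (AddSubmonoid.subset_closure hp) k),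
    (add_assoc _ _ _).symm⟩

lemma exists_eq_add_nsmul_of_mem_linearSet {M : Type*} [AddCommMonoid M] {a w : M}
    {t : Finset M} {u : M →+ ℤ} {C : ℤ} (ha : u a ≤ C) (ht : ∀ q ∈ t, u q ≤ C)
    (hw : w ∈ linearSet a t) (hCw : C < u w) :
    ∃ p ∈ t, ∃ w₀ ∈ linearSet a t, ∃ k : ℕ,
      w = w₀ + k • p ∧ 0 < u p ∧ u w ≤ C + #t * (k * C) := by
  classical
  obtain ⟨y, hy, rfl⟩ := hw
  obtain ⟨f, -, rfl⟩ := AddSubmonoid.mem_closure_finset.1 hy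
  simp only [vadd_eq_add, map_add, map_sum, map_nsmul] at hCw ⊢
  have hpos : {q ∈ t | 0 < u q}.Nonempty := by
    by_contra! hempty
    have : ∑ q ∈ t, f q • u q ≤ 0 := sum_nonpos fun q hq =>
      smul_nonpos_of_nonneg_of_nonpos (Nat.zero_le _) (not_lt.1 (filter_eq_empty_iff.1 hempty hq))
    linarith
  obtain ⟨p, hp, hmax⟩ := exists_max_image _ f hpos
  obtain ⟨hpt, hup⟩ := mem_filter.1 hp
  refine ⟨p, hpt, a + ∑ q ∈ t.erase p, f q • q, ⟨_, sum_mem fun q hq => nsmul_mem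
    (AddSubmonoid.subset_closure (mem_of_mem_erase hq)) _, rfl⟩, f p, ?_, hup, ?_⟩
  · rw [add_assoc, sum_erase_add _ _ hpt]
  · have hC : 0 ≤ C := hup.le.trans (ht p hpt)
    have hterm (q : M) (hq : q ∈ t) : f q • u q ≤ f p * C := by
      rw [nsmul_eq_mul]
      rcases le_or_gt (u q) 0 with h | h
      · exact (mul_nonpos_of_nonneg_of_nonpos (by positivity) h).trans (by positivity)
      · gcongr
        exacts [hmax q (mem_filter.2 ⟨hq, h⟩), ht q hq]
    simpa using add_le_add ha (sum_le_card_nsmul _ _ _ hterm)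

lemma eventually_mul_pow_card_primeFactors_add_lt (K c C P : ℕ) :
    ∀ᶠ v in atTop, C + K * c ^ #(v + P).primeFactors < v := by
  have hsmall := (isLittleO_pow_card_primeFactors c).def
    (show (0 : ℝ) < 1 / (2 * (K + 1)) by positivity)
  filter_upwards [(tendsto_add_atTop_nat P).eventually hsmall, eventually_gt_atTop (2 * C + P)]
    with v hv hvC
  rw [Real.norm_of_nonneg (by positivity), Real.norm_of_nonneg (by positivity),
    div_mul_eq_mul_div, le_div_iff₀ (by positivity)] at hv
  have hv' : c ^ #(v + P).primeFactors * (2 * (K + 1)) ≤ 1 * (v + P) := by exact_mod_cast hv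
  nlinarith [Nat.zero_le (c ^ #(v + P).primeFactors)]

lemma exists_pos_forall_dvd (F : Finset ℤ) : ∃ N : ℕ, 0 < N ∧ ∀ x ∈ F, x ≠ 0 → x ∣ N := by
  refine ⟨∏ x ∈ F with x ≠ 0, x.natAbs, prod_pos fun x hx => ?_, fun x hx hx0 => ?_⟩
  · exact Int.natAbs_pos.2 (mem_filter.1 hx).2
  · exact Int.natAbs_dvd.1 <| Int.natCast_dvd_natCast.2 <|
      dvd_prod_of_mem Int.natAbs (mem_filter.2 ⟨hx, hx0⟩)

section

variable {ι : Type*} {u : (ι → ℤ) →+ ℤ} {a w₀ p : ι → ℤ} {t : Finset (ι → ℤ)} {C k V : ℕ}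
  {h : ℤ}

lemma eliminate_eq_of_mem_linearSet {w : ι → ℤ} (hz : ∀ q ∈ t, eliminate u p q = 0)
    (hw : w ∈ linearSet a t) :
    eliminate u p w = eliminate u p a := by
  obtain ⟨y, hy, rfl⟩ := hw
  have hker : AddSubmonoid.closure (t : Set (ι → ℤ)) ≤ AddMonoidHom.mker (eliminate u p) :=
    AddSubmonoid.closure_le.2 fun q hq => hz q hq
  simp only [vadd_eq_add]
  rw [map_add, AddMonoidHom.mem_mker.1 (hker hy), add_zero]

variable [Fintype ι]

lemma exists_isPrimitive_mem_linearSet_of_gcd_eliminate_dvd {q : ι → ℤ} (hp : p ∈ t)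
    (hq : q ∈ t) (hup : 0 < u p) (hqC : u q ≤ C)
    (hw₀ : w₀ ∈ linearSet a t) (hw : IsPrimitive (w₀ + k • p)) (hh : 0 ≤ h)
    (hdvd : univ.gcd (eliminate u p q) ∣ h) (hV : V ≠ 0) (huV : u (w₀ + k • p + h • p) = V)
    (hk : C * 4 ^ #V.primeFactors ≤ k) :
    ∃ w ∈ linearSet a t, IsPrimitive w ∧ u w = V := by
  obtain ⟨s, hs, hprim⟩ := exists_isPrimitive_add_smul hw (map_eliminate u p q) hdvd hV huV
  refine ⟨_, ?_, hprim, ?_⟩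
  · have hcoef : 0 ≤ k + h - s * u q := by
      have : (s : ℤ) * u q ≤ k := calc
        (s : ℤ) * u q ≤ s * C := by gcongr
        _ ≤ 4 ^ #V.primeFactors * C := by gcongr; exact_mod_cast hs
        _ ≤ k := by rw [mul_comm]; exact_mod_cast hk
      linarith
    obtain ⟨x, hx : _ = (x : ℤ)⟩ := Int.eq_ofNat_of_zero_le hcoef
    obtain ⟨y, hy : _ = (y : ℤ)⟩ := Int.eq_ofNat_of_zero_le hup.le
    have heq : w₀ + k • p + h • p + s • eliminate u p q = w₀ + x • p + (s * y) • q := by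
      rw [eliminate_apply, ← natCast_zsmul, ← natCast_zsmul p x, ← natCast_zsmul q,
        ← hx, ← natCast_zsmul _ s, Nat.cast_mul, ← hy]
      module
    exact heq ▸ add_nsmul_mem_linearSet (add_nsmul_mem_linearSet hw₀ hp x) hq (s * y)
  · rw [map_add, huV, map_nsmul, map_eliminate, smul_zero, add_zero]

lemma exists_isPrimitive_mem_linearSet (hp : p ∈ t) (hup : 0 < u p) (htC : ∀ q ∈ t, u q ≤ C)
    (hw₀ : w₀ ∈ linearSet a t) (hw : IsPrimitive (w₀ + k • p)) (hCw : C < u (w₀ + k • p))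
    (hh : 0 ≤ h)
    (hdvd : ∀ q ∈ insert a t, eliminate u p q ≠ 0 → univ.gcd (eliminate u p q) ∣ h)
    (hV : V ≠ 0) (huV : u (w₀ + k • p + h • p) = V) (hk : C * 4 ^ #V.primeFactors ≤ k) :
    ∃ w ∈ linearSet a t, IsPrimitive w ∧ u w = V := by
  by_cases hz : ∀ q ∈ t, eliminate u p q = 0
  · have hmem := add_nsmul_mem_linearSet hw₀ hp
    have hinv := eliminate_eq_of_mem_linearSet hz (hmem k)
    have ha : eliminate u p a ≠ 0 := fun h0 => by
      have := Int.le_of_dvd hup (hw.map_dvd_of_eliminate_eq_zero (hinv.trans h0))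
      exact (this.trans (htC p hp)).not_gt hCw
    refine ⟨_, ?_, hw.add_smul_of_gcd_eliminate_dvd (u := u) ?_, huV⟩
    · lift h to ℕ using hh
      rw [natCast_zsmul, add_assoc, ← add_nsmul]
      exact hmem _
    · exact hinv ▸ hdvd a (mem_insert_self _ _) ha
  · push Not at hz
    obtain ⟨q, hq, hqz⟩ := hz
    exact exists_isPrimitive_mem_linearSet_of_gcd_eliminate_dvd hp hq hup (htC q hq) hw₀ hw hh
      (hdvd q (mem_insert_of_mem hq) hqz) hV huV hk

end

lemma eventually_exists_isPrimitive_map_eq_add {ι : Type*} [Fintype ι] (u : (ι → ℤ) →+ ℤ)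
    {W : Set (ι → ℤ)} (hW : IsLinearSet W) :
    ∃ P : ℕ, 0 < P ∧ ∀ᶠ v : ℕ in atTop,
      (∃ w ∈ W, IsPrimitive w ∧ u w = v) → ∃ w ∈ W, IsPrimitive w ∧ u w = (v + P : ℕ) := by
  obtain ⟨a, t, rfl⟩ := isLinearSet_iff.1 hW
  obtain ⟨C, hC⟩ : ∃ C : ℕ, ∀ q ∈ insert a t, u q ≤ C :=
    ⟨(insert a t).sup fun q => (u q).toNat, fun q hq => (Int.self_le_toNat _).trans <|
      Nat.cast_le.2 (le_sup (f := fun q => (u q).toNat) hq)⟩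
  obtain ⟨N, hN, hdvd⟩ := exists_pos_forall_dvd
    (t.image u ∪ (t ×ˢ insert a t).image fun x => univ.gcd (eliminate u x.1 x.2))
  refine ⟨N * N, by positivity, ?_⟩
  filter_upwards [eventually_mul_pow_card_primeFactors_add_lt (#t * C * C) 4 C (N * N)] with v hv
  rintro ⟨w, hwW, hw, hwv⟩
  have hCw : (C : ℤ) < u w := by rw [hwv]; exact_mod_cast (Nat.le_add_right _ _).trans_lt hv
  obtain ⟨p, hp, w₀, hw₀, k, rfl, hup, hle⟩ := exists_eq_add_nsmul_of_mem_linearSet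
    (hC a (mem_insert_self _ _)) (fun q hq => hC q (mem_insert_of_mem hq)) hwW hCw
  have hpN : u p ∣ N := hdvd _ (mem_union_left _ (mem_image_of_mem u hp)) hup.ne'
  obtain ⟨g, hg⟩ := hpN
  have hk : C * 4 ^ #(v + N * N).primeFactors ≤ k := by
    by_contra! hlt
    have hvk : v ≤ C + #t * (k * C) := by rw [hwv] at hle; exact_mod_cast hle
    have : #t * (k * C) ≤ #t * C * C * 4 ^ #(v + N * N).primeFactors := calc
      #t * (k * C) ≤ #t * (C * 4 ^ #(v + N * N).primeFactors * C) := by gcongr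
      _ = _ := by ring
    omega
  have hg0 : 0 ≤ g := by
    by_contra! hneg
    have := mul_neg_of_pos_of_neg hup hneg
    omega
  refine exists_isPrimitive_mem_linearSet (h := g * N) hp hup
    (fun q hq => hC q (mem_insert_of_mem hq)) hw₀ hw hCw (by positivity) (fun q hq hqz => ?_)
    (by positivity) ?_ hk
  · refine (hdvd _ (mem_union_right _ (mem_image.2 ⟨(p, q), by simp_all, rfl⟩)) ?_).mul_left g
    rw [Ne, Finset.gcd_eq_zero_iff]
    exact fun h0 => hqz (funext fun i => h0 i (mem_univ i))
  · rw [map_add, hwv, map_zsmul, smul_eq_mul, mul_right_comm, mul_comm g, ← hg]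
    push_cast
    rfl

end LinearSets

section AlmostProgUnion

open Finset Filter

/-- Sets of reals which differ by finitely many points from a finite union of sets
`D + 1 / Prog(α, β)`. -/
def IsAlmostProgUnion (D : ℝ) (S : Set ℝ) : Prop :=
  ∃ I : Finset (ℚ × ℚ), (∀ i ∈ I, 0 < i.1 ∧ 0 < i.2) ∧
    (symmDiff S (⋃ i ∈ I, progSet D i.1 i.2)).Finite

namespace IsAlmostProgUnion

variable {D : ℝ} {S T : Set ℝ}

lemma of_finite (hS : S.Finite) : IsAlmostProgUnion D S :=
  ⟨∅, by simp, hS.subset (by simp [symmDiff])⟩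

lemma union (hS : IsAlmostProgUnion D S) (hT : IsAlmostProgUnion D T) :
    IsAlmostProgUnion D (S ∪ T) := by
  classical
  obtain ⟨I, hI, hSI⟩ := hS
  obtain ⟨J, hJ, hTJ⟩ := hT
  refine ⟨I ∪ J, fun i hi => (mem_union.1 hi).elim (hI i) (hJ i), (hSI.union hTJ).subset ?_⟩
  rw [set_biUnion_union]
  exact Set.union_symmDiff_union_subset

lemma biUnion {ι : Type*} {s : Set ι} (hs : s.Finite) {f : ι → Set ℝ}
    (hf : ∀ i ∈ s, IsAlmostProgUnion D (f i)) : IsAlmostProgUnion D (⋃ i ∈ s, f i) := by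
  induction s, hs using Set.Finite.induction_on with
  | empty => simpa using of_finite (D := D) Set.finite_empty
  | insert _ _ ih =>
    rw [Set.biUnion_insert]
    exact (hf _ (Set.mem_insert _ _)).union (ih fun i hi => hf i (Set.mem_insert_of_mem _ hi))

lemma iUnion {ι : Type*} [Finite ι] {f : ι → Set ℝ} (hf : ∀ i, IsAlmostProgUnion D (f i)) :
    IsAlmostProgUnion D (⋃ i, f i) := by
  simpa using biUnion Set.finite_univ fun i _ => hf i

lemma exists_fin (hS : IsAlmostProgUnion D S) :
    ∃ (N : ℕ) (α β : Fin N → ℚ), (∀ i, 0 < α i) ∧ (∀ i, 0 < β i) ∧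
      (symmDiff S (⋃ i : Fin N, progSet D (α i) (β i))).Finite := by
  obtain ⟨I, hI, hSI⟩ := hS
  let e := I.equivFin.symm
  refine ⟨#I, fun j => (e j).1.1, fun j => (e j).1.2, fun j => (hI _ (e j).2).1,
    fun j => (hI _ (e j).2).2, ?_⟩
  rwa [e.surjective.iUnion_comp fun i : I => progSet D i.1.1 i.1.2, Set.iUnion_subtype]

end IsAlmostProgUnion

lemma symmDiff_image_subset_image_symmDiff {α β : Type*} (f : α → β) (s t : Set α) :
    symmDiff (f '' s) (f '' t) ⊆ f '' symmDiff s t := by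
  rintro _ (⟨⟨a, ha, rfl⟩, hn⟩ | ⟨⟨a, ha, rfl⟩, hn⟩)
  · exact ⟨a, .inl ⟨ha, fun h => hn ⟨a, h, rfl⟩⟩, rfl⟩
  · exact ⟨a, .inr ⟨ha, fun h => hn ⟨a, h, rfl⟩⟩, rfl⟩

lemma exists_finset_symmDiff_progressions_finite {V : Set ℕ} {P : ℕ} (hP : 0 < P)
    (hV : ∀ᶠ v in atTop, v ∈ V → v + P ∈ V) :
    ∃ F : Finset ℕ, (∀ m ∈ F, 0 < m) ∧
      (symmDiff V (⋃ m ∈ F, Set.range fun s => P * s + m)).Finite := by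
  classical
  obtain ⟨v₀, hv₀⟩ := eventually_atTop.1 hV
  let A (r : ℕ) : Set ℕ := {v ∈ V | v₀ < v ∧ v % P = r}
  have hsInf {m : ℕ} (hm : m ∈ ({r ∈ range P | (A r).Nonempty}).image fun r => sInf (A r)) :
      m ∈ V ∧ v₀ < m := by
    obtain ⟨r, hr, rfl⟩ := mem_image.1 hm
    exact ⟨(Nat.sInf_mem (mem_filter.1 hr).2).1, (Nat.sInf_mem (mem_filter.1 hr).2).2.1⟩
  refine ⟨({r ∈ range P | (A r).Nonempty}).image fun r => sInf (A r),
    fun m hm => (Nat.zero_le _).trans_lt (hsInf hm).2, (Set.finite_Iic v₀).subset ?_⟩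
  rintro v (⟨hv, hnot⟩ | ⟨hv, hnot⟩)
  · by_contra! hlt
    have hvA : v ∈ A (v % P) := ⟨hv, by simpa using hlt, rfl⟩
    have hmod : sInf (A (v % P)) ≡ v [MOD P] := (Nat.sInf_mem ⟨v, hvA⟩).2.2
    obtain ⟨s, hs⟩ := (Nat.modEq_iff_dvd' (Nat.sInf_le hvA)).1 hmod
    refine hnot (Set.mem_biUnion (mem_image_of_mem _ (mem_filter.2
      ⟨mem_range.2 (Nat.mod_lt v hP), v, hvA⟩)) ⟨s, ?_⟩)
    have := Nat.sInf_le hvA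
    simp only
    omega
  · obtain ⟨m, hm, s, rfl⟩ := Set.mem_iUnion₂.1 hv
    obtain ⟨hmV, hvm⟩ := hsInf hm
    have hmem (s : ℕ) : P * s + m ∈ V := by
      induction s with
      | zero => simpa using hmV
      | succ s ih =>
        have := hv₀ (P * s + m) (by omega) ih
        rwa [add_right_comm, ← Nat.mul_succ] at this
    exact absurd (hmem s) hnot

namespace IsAlmostProgUnion

lemma image_of_eventually_add_mem (D : ℝ) {V : Set ℕ} {P : ℕ} (hP : 0 < P)
    (hV : ∀ᶠ v in atTop, v ∈ V → v + P ∈ V) {d : ℚ} (hd : 0 < d) :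
    IsAlmostProgUnion D ((fun v : ℕ => D + 1 / ((d : ℝ) * v)) '' V) := by
  classical
  obtain ⟨F, hF, hfin⟩ := exists_finset_symmDiff_progressions_finite hP hV
  refine ⟨F.image fun m : ℕ => (d * P, d * m), fun i hi => ?_,
    (hfin.image fun v : ℕ => D + 1 / ((d : ℝ) * v)).subset ?_⟩
  · obtain ⟨m, hm, rfl⟩ := mem_image.1 hi
    have hm' : (0 : ℚ) < m := Nat.cast_pos.2 (hF m hm)
    exact ⟨by positivity, by positivity⟩
  · refine Eq.trans_subset ?_ (symmDiff_image_subset_image_symmDiff _ _ _)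
    congr 1
    simp only [set_biUnion_finset_image, Set.image_iUnion, ← Set.range_comp]
    refine Set.iUnion₂_congr fun m _ => Set.ext fun x => exists_congr fun s => ?_
    simp only [Function.comp_apply, eq_comm (b := x)]
    push_cast
    ring_nf

lemma image_of_isSemilinearSet {ι : Type*} [Fintype ι] (D : ℝ) {W : Set (ι → ℤ)}
    (hW : IsSemilinearSet W) (u : (ι → ℤ) →+ ℤ) (hpos : ∀ w ∈ W, 0 < u w) {d : ℚ} (hd : 0 < d) :
    IsAlmostProgUnion D ((fun w => D + 1 / ((d : ℝ) * u w)) '' {w ∈ W | IsPrimitive w}) := by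
  obtain ⟨S, hS, hlin, rfl⟩ := hW
  have hunion : {w ∈ ⋃₀ S | IsPrimitive w} = ⋃ L ∈ S, {w ∈ L | IsPrimitive w} := by
    ext w
    simp only [Set.mem_sUnion, Set.mem_ofPred_eq, Set.mem_iUnion, exists_prop]
    tauto
  rw [hunion, Set.image_iUnion₂]
  refine biUnion hS fun L hL => ?_
  obtain ⟨P, hP, hperiodic⟩ := eventually_exists_isPrimitive_map_eq_add u (hlin L hL)
  convert image_of_eventually_add_mem D hP hperiodic hd using 1
  ext x
  constructor
  · rintro ⟨w, ⟨hw, hprim⟩, rfl⟩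
    obtain ⟨v, hv : u w = (v : ℤ)⟩ := Int.eq_ofNat_of_zero_le (hpos w ⟨L, hL, hw⟩).le
    exact ⟨v, ⟨w, hw, hprim, hv⟩, by simp [hv]⟩
  · rintro ⟨v, ⟨w, hw, hprim, hv⟩, rfl⟩
    exact ⟨w, ⟨hw, hprim⟩, by simp [hv]⟩

end IsAlmostProgUnion

end AlmostProgUnion

section Semilinear

open Set
open scoped Pointwise

variable {M : Type*} [AddCommMonoid M] [AddMonoid.FG M]

lemma isSemilinearSet_Ici (k : ℤ) : IsSemilinearSet (Ici k) := by
  have h : Ici k = k +ᵥ (AddSubmonoid.closure ({1} : Set ℤ) : Set ℤ) := by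
    ext z
    simp only [mem_Ici, mem_vadd_set, SetLike.mem_coe, AddSubmonoid.mem_closure_singleton]
    constructor
    · intro hz
      exact ⟨z - k, ⟨(z - k).toNat, by simp [hz]⟩, by simp⟩
    · rintro ⟨_, ⟨m, rfl⟩, rfl⟩
      simp
  rw [h]
  exact ((IsLinearSet.closure_of_finite (finite_singleton 1)).vadd k).isSemilinearSet

lemma isSemilinearSet_setOf_le_add (f g : M →+ ℤ) (k : ℤ) :
    IsSemilinearSet {w | f w ≤ g w + k} := by
  convert (isSemilinearSet_Ici (-k)).preimage (g - f) using 1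
  ext w
  simp only [mem_ofPred_eq, mem_preimage, AddMonoidHom.sub_apply, mem_Ici]
  omega

lemma isSemilinearSet_setOf_le (f g : M →+ ℤ) : IsSemilinearSet {w | f w ≤ g w} := by
  simpa using isSemilinearSet_setOf_le_add f g 0

end Semilinear

section MinMax

open Set

variable {ι J κ : Type*}

/-- The vectors of `C` at which the minimum over the available `k` of `max_j e k j / M j` is
attained by `e k j / M j`; here `k` is available at `w` if `w ∈ S k`. -/
def minMaxRegion (C : Set (ι → ℤ)) (S : κ → Set (ι → ℤ)) (e : κ → J → ℕ)
    (M : J → (ι → ℤ) →+ ℤ) (k : κ) (j : J) : Set (ι → ℤ) :=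
  C ∩ S k ∩ (⋂ j', {w | (e k j' • M j) w ≤ (e k j • M j') w}) ∩
    ⋂ k', ((S k')ᶜ ∪ ⋃ j', {w | (e k j • M j') w ≤ (e k' j' • M j) w})

variable {C : Set (ι → ℤ)} {S : κ → Set (ι → ℤ)} {e : κ → J → ℕ} {M : J → (ι → ℤ) →+ ℤ}

lemma mem_minMaxRegion {k : κ} {j : J} {w : ι → ℤ} :
    w ∈ minMaxRegion C S e M k j ↔ w ∈ C ∧ w ∈ S k ∧ (∀ j', e k j' * M j w ≤ e k j * M j' w) ∧
      ∀ k', w ∈ S k' → ∃ j', e k j * M j' w ≤ e k' j' * M j w := by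
  simp [minMaxRegion, and_assoc, imp_iff_not_or]

lemma isSemilinearSet_minMaxRegion [Finite ι] [Finite J] [Finite κ] (hC : IsSemilinearSet C)
    (hS : ∀ k, IsSemilinearSet (S k)) (k : κ) (j : J) :
    IsSemilinearSet (minMaxRegion C S e M k j) :=
  ((hC.inter (hS k)).inter (.iInter fun _ => isSemilinearSet_setOf_le _ _)).inter
    (.iInter fun k' => (hS k').compl.union (.iUnion fun _ => isSemilinearSet_setOf_le _ _))

section

variable {w : ι → ℤ} {δ : ℝ}

lemma eq_div_of_mem_minMaxRegion {k : κ} {j : J} (hw : w ∈ minMaxRegion C S e M k j)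
    (hM : ∀ j, 0 < M j w) (hδ : ∀ t : ℝ, δ ≤ t ↔ ∃ k, w ∈ S k ∧ ∀ j, (e k j : ℝ) ≤ t * M j w) :
    δ = e k j / M j w := by
  obtain ⟨-, hk, hmax, hmin⟩ := mem_minMaxRegion.1 hw
  have hM' (j : J) : (0 : ℝ) < M j w := mod_cast hM j
  apply le_antisymm
  · refine (hδ _).2 ⟨k, hk, fun j' => ?_⟩
    rw [div_mul_eq_mul_div, le_div_iff₀ (hM' j)]
    exact_mod_cast hmax j'
  · obtain ⟨k', hk', hle⟩ := (hδ δ).1 le_rfl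
    obtain ⟨j', hj'⟩ := hmin k' hk'
    calc (e k j : ℝ) / M j w ≤ e k' j' / M j' w := by
          rw [div_le_div_iff₀ (hM' j) (hM' j')]
          exact_mod_cast hj'
      _ ≤ δ := (div_le_iff₀ (hM' j')).2 (hle j')

lemma exists_mem_minMaxRegion [Finite J] [Nonempty J] (hw : w ∈ C)
    (hM : ∀ j, 0 < M j w) (hδ : ∀ t : ℝ, δ ≤ t ↔ ∃ k, w ∈ S k ∧ ∀ j, (e k j : ℝ) ≤ t * M j w) :
    ∃ k j, w ∈ minMaxRegion C S e M k j := by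
  have hM' (j : J) : (0 : ℝ) < M j w := mod_cast hM j
  obtain ⟨k, hk, hle⟩ := (hδ δ).1 le_rfl
  obtain ⟨j, hj⟩ := Finite.exists_max fun j => (e k j : ℝ) / M j w
  refine ⟨k, j, mem_minMaxRegion.2 ⟨hw, hk, fun j' => ?_, fun k' hk' => ?_⟩⟩
  · have := (div_le_div_iff₀ (hM' j') (hM' j)).1 (hj j')
    exact_mod_cast this
  · obtain ⟨j', hj'⟩ := Finite.exists_max fun j => (e k' j : ℝ) / M j w
    have hle' : (e k j : ℝ) / M j w ≤ e k' j' / M j' w :=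
      ((div_le_iff₀ (hM' j)).2 (hle j)).trans
        ((hδ _).2 ⟨k', hk', fun i => (div_le_iff₀ (hM' i)).1 (hj' i)⟩)
    have := (div_le_div_iff₀ (hM' j) (hM' j')).1 hle'
    exact ⟨j', mod_cast this⟩

end

lemma IsAlmostProgUnion.image_of_minMax [Fintype ι] [Finite J] [Nonempty J] [Finite κ] (D : ℝ)
    (hC : IsSemilinearSet C) (hS : ∀ k, IsSemilinearSet (S k)) (hM : ∀ w ∈ C, ∀ j, 0 < M j w)
    {δ : (ι → ℤ) → ℝ} (hδ : ∀ w ∈ C, IsPrimitive w →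
      ∀ t : ℝ, δ w ≤ t ↔ ∃ k, w ∈ S k ∧ ∀ j, (e k j : ℝ) ≤ t * M j w)
    {b : ℚ} (hb : 0 < b) :
    IsAlmostProgUnion D ((fun w => D + δ w / b) '' {w ∈ C | IsPrimitive w}) := by
  have hsubset (k : κ) (j : J) : minMaxRegion C S e M k j ⊆ C := fun w hw =>
    (mem_minMaxRegion.1 hw).1
  have hcover : {w ∈ C | IsPrimitive w} =
      ⋃ k, ⋃ j, {w ∈ minMaxRegion C S e M k j | IsPrimitive w} := by
    ext w
    simp only [mem_ofPred_eq, mem_iUnion]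
    refine ⟨fun ⟨hw, hprim⟩ => ?_, fun ⟨k, j, hw, hprim⟩ => ⟨hsubset k j hw, hprim⟩⟩
    obtain ⟨k, j, h⟩ := exists_mem_minMaxRegion hw (hM w hw) (hδ w hw hprim)
    exact ⟨k, j, h, hprim⟩
  simp only [hcover, image_iUnion]
  refine iUnion fun k => iUnion fun j => ?_
  have heq (w : ι → ℤ) (hw : w ∈ minMaxRegion C S e M k j ∧ IsPrimitive w) :
      δ w = e k j / M j w :=
    eq_div_of_mem_minMaxRegion hw.1 (hM w (hsubset k j hw.1)) (hδ w (hsubset k j hw.1) hw.2)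
  rcases (e k j).eq_zero_or_pos with he | he
  · refine of_finite ((finite_singleton D).subset ?_)
    rintro _ ⟨w, hw, rfl⟩
    simp [heq w hw, he]
  · have he' : (0 : ℚ) < e k j := mod_cast he
    convert image_of_isSemilinearSet D (isSemilinearSet_minMaxRegion hC hS k j) (M j)
      (fun w hw => hM w (hsubset k j hw) j) (div_pos hb he') using 1
    refine image_congr fun w hw => ?_
    rw [heq w hw]
    push_cast
    rw [div_mul_eq_mul_div, one_div_div, div_div, mul_comm (M j w : ℝ)]

end MinMax

section RationalFunctionals

lemma exists_rat_linearMap_eq_one : ∃ φ : ℝ →ₗ[ℚ] ℚ, φ 1 = 1 := by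
  obtain ⟨φ, hφ⟩ := LinearMap.exists_leftInverse_of_injective (Algebra.linearMap ℚ ℝ)
    (LinearMap.ker_eq_bot.2 (algebraMap ℚ ℝ).injective)
  exact ⟨φ, by simpa using LinearMap.congr_fun hφ 1⟩

lemma exists_rat_linearMap_eq_zero : ∃ ψ : ℝ →ₗ[ℚ] ℚ, ψ 1 = 0 ∧ ψ √2 ≠ 0 := by
  have hmem : √2 ∉ Submodule.span ℚ {(1 : ℝ)} := by
    rw [Submodule.mem_span_singleton]
    rintro ⟨q, hq⟩
    exact irrational_sqrt_two ⟨q, by simpa [Rat.smul_def] using hq⟩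
  obtain ⟨ψ, hψ, hmap⟩ := Submodule.exists_dual_map_eq_bot_of_notMem hmem inferInstance
  refine ⟨ψ, ?_, hψ⟩
  rw [← Submodule.mem_bot ℚ, ← hmap]
  exact Submodule.mem_map_of_mem (Submodule.mem_span_singleton_self 1)

lemma map_sum_mul_ratCast {κ : Type*} [Fintype κ] (φ : ℝ →ₗ[ℚ] ℚ) (t : κ → ℝ) (q : κ → ℚ) :
    φ (∑ j, t j * q j) = ∑ j, φ (t j) * q j := by
  simp_rw [map_sum, mul_comm _ ((q _ : ℚ) : ℝ), ← Rat.smul_def, map_smul, smul_eq_mul, mul_comm]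

open Filter Topology in
-- Applying a `ℚ`-linear retraction `ℝ → ℚ` to an optimal point preserves all tight constraints, so
-- moving towards its image, or away from it, does not improve the optimum.
lemma exists_ratCast_eq_of_isLeast {ι κ : Type*} [Finite ι] [Fintype κ] {a : ι → κ → ℚ} {c : ι → ℚ}
    {D : ℝ} (hD : IsLeast {δ : ℝ | ∃ t : κ → ℝ, ∀ i, ∑ j, t j * a i j + c i ≤ δ} D) :
    ∃ q : ℚ, (q : ℝ) = D := by
  obtain ⟨⟨t, ht⟩, hleast⟩ := hD
  obtain ⟨φ, hφ⟩ := exists_rat_linearMap_eq_one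
  have hφc (q : ℚ) : φ q = q := by
    rw [← mul_one (q : ℝ), ← Rat.smul_def, map_smul, hφ, smul_eq_mul, mul_one]
  let s (i : ι) : ℝ := ∑ j, t j * a i j + c i - D
  have hφs (i : ι) : (φ (s i) : ℝ) = ∑ j, (φ (t j) : ℝ) * a i j + c i - φ D := by
    simp only [s, map_sub, map_add, map_sum_mul_ratCast, hφc]
    push_cast
    rfl
  have hfeasible : ∀ᶠ ε in 𝓝 (0 : ℝ), ∀ i, s i + ε * (φ (s i) - s i) ≤ 0 := by
    refine eventually_all.2 fun i => ?_
    rcases (sub_nonpos.2 (ht i)).eq_or_lt with h0 | hneg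
    · change s i = 0 at h0
      simp [h0]
    · have hcont : Continuous fun ε : ℝ => s i + ε * (φ (s i) - s i) := by fun_prop
      exact (hcont.tendsto' 0 (s i) (by simp)).eventually_le_const hneg
  have hmin : IsLocalMin (fun ε : ℝ => D + ε * (φ D - D)) 0 := by
    filter_upwards [hfeasible] with ε hε
    simp only [zero_mul, add_zero]
    refine hleast ⟨fun j => t j + ε * (φ (t j) - t j), fun i => ?_⟩
    have hsum : ∑ j, (t j + ε * (φ (t j) - t j)) * a i j =
        ∑ j, t j * (a i j : ℝ) + ε * (∑ j, (φ (t j) : ℝ) * a i j - ∑ j, t j * (a i j : ℝ)) := by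
      simp only [add_mul, sub_mul, mul_assoc, Finset.sum_add_distrib, Finset.sum_sub_distrib,
        Finset.mul_sum, mul_sub]
    have := hε i
    rw [hφs] at this
    simp only [s] at this
    rw [hsum]
    linarith
  have hderiv : HasDerivAt (fun ε : ℝ => D + ε * (φ D - D)) (φ D - D) 0 := by
    simpa using ((hasDerivAt_id (0 : ℝ)).mul_const (φ D - D)).const_add D
  exact ⟨φ D, sub_eq_zero.1 (hmin.hasDerivAt_eq_zero hderiv)⟩

end RationalFunctionals

section DistanceToCenter

variable {n k : ℕ}

lemma spanTorus_eq_range (v : Fin k → Fin n → ℤ) :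
    spanTorus v = Set.range fun (θ : Fin k → AddCircle (1 : ℝ)) i => ∑ j, v j i • θ j := by
  have hproj (t : Fin k → ℝ) : (torusProj fun i => ∑ j, t j * (v j i : ℝ)) =
      fun i => ∑ j, v j i • (t j : AddCircle (1 : ℝ)) := by
    funext i
    simp only [torusProj, QuotientAddGroup.mk_sum, ← AddCircle.coe_zsmul, zsmul_eq_mul, mul_comm]
  ext p
  constructor
  · rintro ⟨t, rfl⟩
    exact ⟨fun j => t j, (hproj t).symm⟩
  · rintro ⟨θ, rfl⟩
    choose t ht using fun j => QuotientAddGroup.mk_surjective (θ j)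
    exact ⟨t, by rw [hproj]; simp_rw [← ht]⟩

lemma isCompact_spanTorus (v : Fin k → Fin n → ℤ) : IsCompact (spanTorus v) := by
  rw [spanTorus_eq_range]
  exact isCompact_range (by fun_prop)

lemma spanTorus_nonempty (v : Fin k → Fin n → ℤ) : (spanTorus v).Nonempty :=
  ⟨_, 0, rfl⟩

lemma dist_coe_le_iff {x y δ : ℝ} :
    dist (x : AddCircle (1 : ℝ)) y ≤ δ ↔ ∃ m : ℤ, |x - (m + y)| ≤ δ := by
  rw [dist_eq_norm, ← AddCircle.coe_sub, UnitAddCircle.norm_eq]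
  simp only [← sub_sub, sub_right_comm x _ y]
  exact ⟨fun h => ⟨_, h⟩, fun ⟨m, hm⟩ => (round_le _ m).trans hm⟩

lemma abs_le_iff_forall_units {x δ : ℝ} : |x| ≤ δ ↔ ∀ s : ℤˣ, (s : ℤ) * x ≤ δ := by
  rw [abs_le']
  refine ⟨fun h s => ?_, fun h => ⟨by simpa using h 1, by simpa using h (-1)⟩⟩
  rcases Int.units_eq_one_or s with rfl | rfl
  · simpa using h.1
  · simpa using h.2

variable [Nonempty (Fin n)]

lemma DVal_eq_infDist (S : Set (Torus n)) :
    DVal S = Metric.infDist (fun _ => ((1 / 2 : ℝ) : AddCircle (1 : ℝ))) S := by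
  have hsup (x : Torus n) : ⨆ i, dist (x i) ((1 / 2 : ℝ) : AddCircle (1 : ℝ)) =
      dist (fun _ => ((1 / 2 : ℝ) : AddCircle (1 : ℝ))) x := by
    refine eq_of_forall_ge_iff fun r => ?_
    rw [ciSup_le_iff (Set.finite_range _).bddAbove, dist_comm, dist_pi_le_iff']
  simp_rw [DVal, hsup, sInf_image', Metric.infDist_eq_iInf]

lemma DVal_spanTorus_le_iff {v : Fin k → Fin n → ℤ} {δ : ℝ} :
    DVal (spanTorus v) ≤ δ ↔
      ∃ (t : Fin k → ℝ) (m : Fin n → ℤ), ∀ i, |∑ j, t j * (v j i : ℝ) - (m i + 1 / 2)| ≤ δ := by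
  have hexists : DVal (spanTorus v) ≤ δ ↔
      ∃ p ∈ spanTorus v, ∀ i, dist (p i) ((1 / 2 : ℝ) : AddCircle (1 : ℝ)) ≤ δ := by
    simp_rw [DVal_eq_infDist, ← dist_pi_le_iff' (g := fun _ => ((1 / 2 : ℝ) : AddCircle (1 : ℝ)))]
    constructor
    · intro h
      obtain ⟨p, hp, heq⟩ := (isCompact_spanTorus v).exists_infDist_eq_dist
        (spanTorus_nonempty v) fun _ => ((1 / 2 : ℝ) : AddCircle (1 : ℝ))
      exact ⟨p, hp, by rwa [dist_comm, ← heq]⟩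
    · rintro ⟨p, hp, hle⟩
      exact (Metric.infDist_le_dist_of_mem hp).trans (by rwa [dist_comm])
  rw [hexists]
  constructor
  · rintro ⟨_, ⟨t, rfl⟩, h⟩
    choose m hm using fun i => dist_coe_le_iff.1 (h i)
    exact ⟨t, m, hm⟩
  · rintro ⟨t, m, h⟩
    exact ⟨_, ⟨t, rfl⟩, fun i => dist_coe_le_iff.2 ⟨m i, h i⟩⟩

lemma DVal_spanTorus_le_half (v : Fin k → Fin n → ℤ) : DVal (spanTorus v) ≤ 1 / 2 :=
  DVal_spanTorus_le_iff.2 ⟨0, 0, fun i => by simp [abs_of_pos]⟩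

lemma exists_ratCast_eq_DVal_spanTorus (v : Fin k → Fin n → ℤ) :
    ∃ q : ℚ, (q : ℝ) = DVal (spanTorus v) := by
  obtain ⟨t₀, m, hm⟩ := DVal_spanTorus_le_iff.1 (le_refl (DVal (spanTorus v)))
  have hconstraint (t : Fin k → ℝ) (i : Fin n) (δ : ℝ) :
      |∑ j, t j * (v j i : ℝ) - (m i + 1 / 2)| ≤ δ ↔ ∀ s : ℤˣ,
        ∑ j, t j * (((s * v j i : ℤ) : ℚ) : ℝ) + ((-(s * (m i + 1 / 2)) : ℚ) : ℝ) ≤ δ := by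
    rw [abs_le_iff_forall_units]
    refine forall_congr' fun s => ?_
    push_cast
    rw [mul_sub, Finset.mul_sum, sub_eq_add_neg]
    simp only [mul_left_comm]
  refine exists_ratCast_eq_of_isLeast (ι := Fin n × ℤˣ) (κ := Fin k)
    (a := fun i j => (i.2 * v j i.1 : ℤ)) (c := fun i => -(i.2 * (m i.1 + 1 / 2)))
    ⟨⟨t₀, fun i => (hconstraint _ _ _).1 (hm i.1) i.2⟩, fun δ ⟨t, ht⟩ => ?_⟩
  exact DVal_spanTorus_le_iff.2 ⟨t, m, fun i => (hconstraint _ _ _).2 fun s => ht (i, s)⟩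

end DistanceToCenter

section Lines

variable {n k : ℕ}

/-- The value at coordinate `i` of the integer combination `w` of the vectors `v j`, as a linear
form in `w`. -/
def coordForm (v : Fin k → Fin n → ℤ) (i : Fin n) : (Fin k → ℤ) →+ ℤ :=
  ∑ j, v j i • Pi.evalAddMonoidHom _ j

lemma coordForm_apply (v : Fin k → Fin n → ℤ) (i : Fin n) (w : Fin k → ℤ) :
    coordForm v i w = ∑ j, v j i * w j := by
  simp [coordForm]

/-- The one-dimensional subtorus `⟨a⟩_ℝ`. -/
def lineTorus (a : Fin n → ℤ) : Set (Torus n) :=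
  spanTorus fun _ : Fin 1 => a

lemma mem_lineTorus {a : Fin n → ℤ} {p : Torus n} :
    p ∈ lineTorus a ↔ ∃ τ : ℝ, p = torusProj fun i => τ * a i := by
  simp only [lineTorus, spanTorus, Set.mem_ofPred_eq, Finset.univ_unique, Fin.default_eq_zero,
    Finset.sum_singleton]
  exact ⟨fun ⟨t, ht⟩ => ⟨t 0, ht⟩, fun ⟨τ, hτ⟩ => ⟨fun _ => τ, hτ⟩⟩

lemma lineTorus_eq_of_smul {a b : Fin n → ℤ} {c : ℚ} (hc : c ≠ 0) (h : ∀ i, (a i : ℚ) = c * b i) :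
    lineTorus a = lineTorus b := by
  have hc' : (c : ℝ) ≠ 0 := mod_cast hc
  have h' (i : Fin n) : (a i : ℝ) = c * b i := mod_cast congrArg (Rat.cast (K := ℝ)) (h i)
  ext p
  simp only [mem_lineTorus, h', ← mul_assoc]
  exact ⟨fun ⟨τ, hτ⟩ => ⟨τ * c, hτ⟩, fun ⟨τ, hτ⟩ => ⟨τ / c, by rwa [div_mul_cancel₀ _ hc']⟩⟩

lemma isProperSub_lineTorus_iff {a : Fin n → ℤ} : IsProperSub (lineTorus a) ↔ ∀ i, a i ≠ 0 := by
  refine ⟨fun h i hi => h fun p hp => ?_, fun h hsub => ?_⟩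
  · obtain ⟨τ, rfl⟩ := mem_lineTorus.1 hp
    exact Set.mem_iUnion.2 ⟨i, by simp [torusProj, hi]⟩
  · obtain ⟨i, hi⟩ := Set.mem_iUnion.1 (hsub (mem_lineTorus.2 ⟨√2, rfl⟩))
    obtain ⟨m, hm⟩ := (AddCircle.coe_eq_zero_iff 1).1 hi
    exact (irrational_sqrt_two.mul_intCast (h i)).ne_int m (by simpa using hm.symm)

lemma isSubtorus_one_iff {T : Set (Torus n)} :
    IsSubtorus 1 T ↔ ∃ a : Fin n → ℤ, a ≠ 0 ∧ T = lineTorus a := by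
  have hne (a : Fin n → ℤ) : (fun i => (a i : ℝ)) ≠ 0 ↔ a ≠ 0 := by
    simp [funext_iff]
  constructor
  · rintro ⟨v, hv, rfl⟩
    refine ⟨v 0, (hne _).1 (hv.ne_zero 0), ?_⟩
    rw [lineTorus]
    exact congrArg _ (funext fun j => by rw [Subsingleton.elim j 0])
  · rintro ⟨a, ha, rfl⟩
    exact ⟨fun _ => a, linearIndependent_unique_iff.2 ((hne a).2 ha), rfl⟩

lemma lineTorus_coordForm_subset (v : Fin k → Fin n → ℤ) (w : Fin k → ℤ) :
    (lineTorus fun i => coordForm v i w) ⊆ spanTorus v := by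
  intro p hp
  obtain ⟨τ, rfl⟩ := mem_lineTorus.1 hp
  refine ⟨fun j => τ * w j, congrArg _ (funext fun i => ?_)⟩
  simp only [coordForm_apply, Int.cast_sum, Int.cast_mul, Finset.mul_sum]
  exact Finset.sum_congr rfl fun j _ => by ring

-- A `ℚ`-linear functional killing `1` but not `√2` turns the inclusion at the point `√2 • a` into a
-- rational linear relation.
lemma exists_rat_coeff_of_lineTorus_subset {a : Fin n → ℤ} {v : Fin k → Fin n → ℤ}
    (h : lineTorus a ⊆ spanTorus v) : ∃ q : Fin k → ℚ, ∀ i, (a i : ℚ) = ∑ j, q j * v j i := by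
  obtain ⟨ψ, hψ₁, hψ₂⟩ := exists_rat_linearMap_eq_zero
  have hint (m : ℤ) : ψ m = 0 := by
    rw [← mul_one (m : ℝ), ← zsmul_eq_mul, map_zsmul, hψ₁, smul_zero]
  obtain ⟨t, ht⟩ := h (mem_lineTorus.2 ⟨√2, rfl⟩)
  refine ⟨fun j => ψ (t j) / ψ √2, fun i => ?_⟩
  obtain ⟨m, hm⟩ := (AddCircle.coe_eq_zero_iff 1).1
    (sub_eq_zero.2 (congrFun ht i) :
      ((√2 * a i - ∑ j, t j * (v j i : ℝ) : ℝ) : AddCircle (1 : ℝ)) = 0)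
  have hψ : ψ √2 * a i - ∑ j, ψ (t j) * v j i = 0 := by
    have h₁ := map_sum_mul_ratCast ψ t fun j => v j i
    have h₂ := map_sum_mul_ratCast ψ (fun _ : Fin 1 => √2) fun _ => a i
    have h₃ := congrArg ψ hm
    simp only [Rat.cast_intCast, Finset.univ_unique, Finset.sum_const, Finset.card_singleton,
      one_smul, zsmul_eq_mul, mul_one, map_sub] at h₁ h₂ h₃
    rw [← h₁, ← h₂, ← h₃, hint]
  simp only [div_mul_eq_mul_div, ← Finset.sum_div]
  rw [eq_div_iff hψ₂]
  linarith

lemma exists_isPrimitive_smul_eq {ι : Type*} [Fintype ι] {q : ι → ℚ} (hq : q ≠ 0) :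
    ∃ (c : ℚ) (w : ι → ℤ), c ≠ 0 ∧ IsPrimitive w ∧ ∀ i, q i = c * w i := by
  obtain ⟨⟨d, hd⟩, hint⟩ :=
    IsLocalization.exist_integer_multiples_of_finite (nonZeroDivisors ℤ) q
  choose z hz using hint
  have hd' : (d : ℚ) ≠ 0 := mod_cast nonZeroDivisors.ne_zero hd
  obtain ⟨i₀, hi₀⟩ := Function.ne_iff.1 hq
  obtain ⟨w, hzw, hw⟩ := Finset.extract_gcd z ⟨i₀, Finset.mem_univ i₀⟩
  have hqw (i : ι) : q i = (Finset.univ.gcd z : ℤ) / d * w i := by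
    have : (d : ℚ) * q i = z i := by simpa using (hz i).symm
    rw [div_mul_eq_mul_div, eq_div_iff hd', mul_comm, this, hzw i (Finset.mem_univ i)]
    push_cast
    rfl
  refine ⟨_, w, fun h0 => hi₀ ?_, hw, hqw⟩
  rw [hqw, h0, zero_mul, Pi.zero_apply]

theorem relSpec1_spanTorus [Nonempty (Fin n)] (v : Fin k → Fin n → ℤ) :
    relSpec1 (spanTorus v) = (fun w => DVal (lineTorus fun i => coordForm v i w)) ''
      {w | IsPrimitive w ∧ ∀ i, coordForm v i w ≠ 0} := by
  ext d
  constructor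
  · rintro ⟨T, hT, hproper, hsub, rfl⟩
    obtain ⟨a, ha, rfl⟩ := isSubtorus_one_iff.1 hT
    obtain ⟨q, hq⟩ := exists_rat_coeff_of_lineTorus_subset hsub
    have hq0 : q ≠ 0 := by
      rintro rfl
      exact ha (funext fun i => by simpa using hq i)
    obtain ⟨c, w, hc, hw, hqw⟩ := exists_isPrimitive_smul_eq hq0
    have haw : lineTorus a = lineTorus fun i => coordForm v i w := by
      refine lineTorus_eq_of_smul hc fun i => ?_
      simp only [hq, hqw, coordForm_apply, Int.cast_sum, Int.cast_mul, Finset.mul_sum]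
      exact Finset.sum_congr rfl fun j _ => by ring
    rw [haw] at hproper ⊢
    exact ⟨w, ⟨hw, isProperSub_lineTorus_iff.1 hproper⟩, rfl⟩
  · rintro ⟨w, ⟨-, hw⟩, rfl⟩
    obtain ⟨i⟩ := ‹Nonempty (Fin n)›
    exact ⟨_, isSubtorus_one_iff.2 ⟨_, Function.ne_iff.2 ⟨i, hw i⟩, rfl⟩,
      isProperSub_lineTorus_iff.2 hw, lineTorus_coordForm_subset v w, rfl⟩

end Lines

section LineCriterion

variable {n k : ℕ}

-- The condition says that the intervals of radius `δ / |A i|` around `c i / A i` meet pairwise.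
lemma exists_abs_mul_sub_le_iff {ι : Type*} [Finite ι] {A c : ι → ℝ} (hA : ∀ i, A i ≠ 0) {δ : ℝ} :
    (∃ τ, ∀ i, |τ * A i - c i| ≤ δ) ↔
      ∀ i j, |c i * A j - c j * A i| ≤ δ * (|A i| + |A j|) := by
  constructor
  · rintro ⟨τ, hτ⟩ i j
    calc |c i * A j - c j * A i| = |(τ * A j - c j) * A i - (τ * A i - c i) * A j| := by ring_nf
      _ ≤ |τ * A j - c j| * |A i| + |τ * A i - c i| * |A j| := by
        simpa only [abs_mul] using abs_sub ((τ * A j - c j) * A i) ((τ * A i - c i) * A j)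
      _ ≤ δ * |A i| + δ * |A j| := by gcongr <;> exact hτ _
      _ = δ * (|A i| + |A j|) := by ring
  · intro h
    rcases isEmpty_or_nonempty ι with _ | _
    · exact ⟨0, isEmptyElim⟩
    have hle (i j : ι) : c i / A i - δ / |A i| ≤ c j / A j + δ / |A j| := by
      have hpos : 0 < |A i * A j| := abs_pos.2 (mul_ne_zero (hA i) (hA j))
      have hdiff : c i / A i - c j / A j ≤ δ * (|A i| + |A j|) / |A i * A j| := by
        rw [div_sub_div _ _ (hA i) (hA j), mul_comm (A i) (c j)]
        exact (le_abs_self _).trans (by rw [abs_div]; gcongr; exact h i j)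
      have hsplit : δ * (|A i| + |A j|) / |A i * A j| = δ / |A i| + δ / |A j| := by
        rw [abs_mul]
        have := abs_ne_zero.2 (hA i)
        have := abs_ne_zero.2 (hA j)
        field_simp
        ring
      linarith
    obtain ⟨i₀, hi₀⟩ := Finite.exists_max fun i => c i / A i - δ / |A i|
    refine ⟨c i₀ / A i₀ - δ / |A i₀|, fun i => ?_⟩
    have hclose : |c i₀ / A i₀ - δ / |A i₀| - c i / A i| ≤ δ / |A i| :=
      abs_le.2 ⟨by linarith [hi₀ i], by linarith [hle i₀ i]⟩
    rwa [le_div_iff₀ (abs_pos.2 (hA i)), ← abs_mul, sub_mul _ (c i / A i),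
      div_mul_cancel₀ _ (hA i)] at hclose

lemma DVal_lineTorus_le_iff_exists_abs [Nonempty (Fin n)] {a : Fin n → ℤ} {r : ℝ} :
    DVal (lineTorus a) ≤ r ↔
      ∃ (τ : ℝ) (m : Fin n → ℤ), ∀ i, |τ * a i - (m i + 1 / 2)| ≤ r := by
  simp only [lineTorus, DVal_spanTorus_le_iff, Finset.univ_unique, Fin.default_eq_zero,
    Finset.sum_singleton]
  exact ⟨fun ⟨t, m, h⟩ => ⟨t 0, m, h⟩, fun ⟨τ, m, h⟩ => ⟨fun _ => τ, m, h⟩⟩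

/-- The linear form `(w, c) ↦ (2 m i + 1) A j - (2 m j + 1) A i + 2 (v₀ ∧ v₁)(i, j) c` on
`ℤ² × ℤ`, where `A i = coordForm v i w`. Replacing `m` by `m + g₀ v₀ + g₁ v₁` amounts to adding
`g₀ w₁ - g₁ w₀` to `c`. -/
def crossForm (v : Fin 2 → Fin n → ℤ) (m : Fin n → ℤ) (i j : Fin n) : (Fin 2 → ℤ) × ℤ →+ ℤ :=
  (2 * m i + 1) • (coordForm v j).comp (AddMonoidHom.fst _ _) -
    (2 * m j + 1) • (coordForm v i).comp (AddMonoidHom.fst _ _) +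
    (2 * (v 0 i * v 1 j - v 0 j * v 1 i)) • AddMonoidHom.snd _ _

lemma crossForm_apply (v : Fin 2 → Fin n → ℤ) (m : Fin n → ℤ) (i j : Fin n) (w : Fin 2 → ℤ)
    (c : ℤ) : crossForm v m i j (w, c) = (2 * m i + 1) * coordForm v j w -
      (2 * m j + 1) * coordForm v i w + 2 * (v 0 i * v 1 j - v 0 j * v 1 i) * c := by
  simp [crossForm]

lemma crossForm_add_coordForm (v : Fin 2 → Fin n → ℤ) (m : Fin n → ℤ) (g w : Fin 2 → ℤ)
    (c : ℤ) (i j : Fin n) : crossForm v (fun i => m i + coordForm v i g) i j (w, c) =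
      crossForm v m i j (w, c + (g 0 * w 1 - g 1 * w 0)) := by
  simp only [crossForm_apply, coordForm_apply, Fin.sum_univ_two]
  ring

variable {v : Fin 2 → Fin n → ℤ} {w : Fin 2 → ℤ} {r : ℝ}

lemma exists_abs_mul_coordForm_sub_le_iff (hw : ∀ i, coordForm v i w ≠ 0) {m : Fin n → ℤ} :
    (∃ τ : ℝ, ∀ i, |τ * coordForm v i w - (m i + 1 / 2)| ≤ r) ↔
      ∀ i j, |(crossForm v m i j (w, 0) : ℝ)| ≤
        2 * r * (|(coordForm v i w : ℝ)| + |(coordForm v j w : ℝ)|) := by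
  rw [exists_abs_mul_sub_le_iff fun i => Int.cast_ne_zero.2 (hw i)]
  refine forall₂_congr fun i j => ?_
  have hcross : (crossForm v m i j (w, 0) : ℝ) =
      2 * ((m i + 1 / 2) * coordForm v j w - (m j + 1 / 2) * coordForm v i w) := by
    rw [crossForm_apply]
    push_cast
    ring
  rw [hcross, abs_mul, abs_two, mul_assoc, mul_le_mul_iff_right₀ two_pos]

lemma IsPrimitive.exists_mul_sub_mul_eq (hw : IsPrimitive w) (c : ℤ) :
    ∃ g : Fin 2 → ℤ, g 0 * w 1 - g 1 * w 0 = c := by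
  have hrel : IsRelPrime (w 0) (w 1) := fun d h₀ h₁ =>
    isUnit_of_dvd_one (hw ▸ Finset.dvd_gcd fun i _ =>
      (Fin.forall_fin_two (p := fun i => d ∣ w i)).2 ⟨h₀, h₁⟩ i)
  obtain ⟨p, q, h⟩ := hrel.isCoprime
  exact ⟨![c * q, -(c * p)], by simp; linear_combination c * h⟩

/-- Representatives `m` of the centres `m + (1/2, …, 1/2)` modulo translation by the lattice
`ℤ v₀ + ℤ v₁`. -/
def centerBox (v : Fin 2 → Fin n → ℤ) : Set (Fin n → ℤ) :=
  Set.Icc (fun i => -(1 + ∑ j, |v j i|)) fun i => 1 + ∑ j, |v j i|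

lemma sub_coordForm_floor_mem_centerBox {m : Fin n → ℤ} {τ : ℝ}
    (h : ∀ i, |τ * coordForm v i w - (m i + 1 / 2)| ≤ 1 / 2) :
    (fun i => m i - coordForm v i fun j => ⌊τ * w j⌋) ∈ centerBox v := by
  suffices hbound : ∀ i, |m i - coordForm v i fun j => ⌊τ * w j⌋| ≤ 1 + ∑ j, |v j i| from
    ⟨fun i => (abs_le.1 (hbound i)).1, fun i => (abs_le.1 (hbound i)).2⟩
  intro i
  have hfract : |∑ j, (v j i : ℝ) * Int.fract (τ * w j)| ≤ ∑ j, |(v j i : ℝ)| := by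
    refine (Finset.abs_sum_le_sum_abs _ _).trans (Finset.sum_le_sum fun j _ => ?_)
    rw [abs_mul, abs_of_nonneg (Int.fract_nonneg (τ * w j))]
    exact mul_le_of_le_one_right (abs_nonneg _) (Int.fract_lt_one _).le
  have heq : (m i : ℝ) - ∑ j, (v j i : ℝ) * ⌊τ * w j⌋ =
      ∑ j, (v j i : ℝ) * Int.fract (τ * w j) - (τ * coordForm v i w - (m i + 1 / 2)) - 1 / 2 := by
    simp only [Int.fract, coordForm_apply, Int.cast_sum, Int.cast_mul, mul_sub,
      Finset.sum_sub_distrib, Finset.mul_sum, mul_left_comm τ]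
    ring
  rify
  rw [coordForm_apply]
  push_cast
  rw [heq]
  obtain ⟨h₁, h₂⟩ := abs_le.1 (h i)
  obtain ⟨h₃, h₄⟩ := abs_le.1 hfract
  exact abs_le.2 ⟨by linarith, by linarith⟩

theorem DVal_lineTorus_le_iff [Nonempty (Fin n)] (hprim : IsPrimitive w)
    (hw : ∀ i, coordForm v i w ≠ 0) :
    DVal (lineTorus fun i => coordForm v i w) ≤ r ↔
      ∃ m ∈ centerBox v, ∃ c : ℤ, ∀ i j, |(crossForm v m i j (w, c) : ℝ)| ≤
        2 * r * (|(coordForm v i w : ℝ)| + |(coordForm v j w : ℝ)|) := by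
  constructor
  · intro hr
    obtain ⟨τ, m, hm⟩ := DVal_lineTorus_le_iff_exists_abs.1
      (le_min hr (DVal_spanTorus_le_half _))
    refine ⟨_, sub_coordForm_floor_mem_centerBox fun i => (hm i).trans (min_le_right _ _),
      ⌊τ * w 0⌋ * w 1 - ⌊τ * w 1⌋ * w 0, fun i j => ?_⟩
    have hcross := crossForm_add_coordForm v
      (fun i => m i - coordForm v i fun j => ⌊τ * w j⌋) (fun j => ⌊τ * w j⌋) w 0 i j
    simp only [sub_add_cancel, zero_add] at hcross
    rw [← hcross]
    exact (exists_abs_mul_coordForm_sub_le_iff hw).1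
      ⟨τ, fun i => (hm i).trans (min_le_left _ _)⟩ i j
  · rintro ⟨m, -, c, h⟩
    obtain ⟨g, rfl⟩ := hprim.exists_mul_sub_mul_eq c
    obtain ⟨τ, hτ⟩ := (exists_abs_mul_coordForm_sub_le_iff hw).2 fun i j => by
      rw [crossForm_add_coordForm v m g, zero_add]
      exact h i j
    exact DVal_lineTorus_le_iff_exists_abs.2 ⟨τ, _, hτ⟩

end LineCriterion

section Density

variable {n : ℕ} {v : Fin 2 → Fin n → ℤ} {w : Fin 2 → ℤ}

lemma IsPrimitive.ne_zero {ι : Type*} [Fintype ι] {w : ι → ℤ} (hw : IsPrimitive w) : w ≠ 0 := by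
  rintro rfl
  exact zero_ne_one ((Finset.gcd_eq_zero_iff.2 fun _ _ => rfl).symm.trans hw)

lemma IsPrimitive.exists_eq_mul_add (hw : IsPrimitive w) {X : Fin 2 → ℝ} {c : ℤ}
    (hX : X 0 * w 1 - X 1 * w 0 = c) :
    ∃ (τ : ℝ) (g : Fin 2 → ℤ), ∀ j, X j = τ * w j + g j := by
  obtain ⟨g, hg⟩ := hw.exists_mul_sub_mul_eq c
  have hg' : (g 0 * w 1 - g 1 * w 0 : ℝ) = c := mod_cast hg
  obtain ⟨p, q, hpq⟩ : ∃ p q : ℤ, (p * w 1 - q * w 0 : ℝ) = 1 := by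
    obtain ⟨h, hh⟩ := hw.exists_mul_sub_mul_eq 1
    exact ⟨h 0, h 1, mod_cast hh⟩
  refine ⟨(X 1 - g 1) * p - (X 0 - g 0) * q, g, Fin.forall_fin_two.2 ⟨?_, ?_⟩⟩
  · linear_combination (g 0 - X 0) * hpq + p * (hX - hg')
  · linear_combination (g 1 - X 1) * hpq + q * (hX - hg')

-- Move `t` orthogonally to `w` until its determinant with `w` becomes an integer.
lemma IsPrimitive.exists_abs_mul_add_sub_le (hw : IsPrimitive w) (t : Fin 2 → ℝ) :
    ∃ (τ : ℝ) (g : Fin 2 → ℤ), ∀ j l, |τ * w j + g j - t j| * |(w l : ℝ)| ≤ 1 / 2 := by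
  let s : ℝ := w 0 ^ 2 + w 1 ^ 2
  have hs : 0 < s := by
    obtain ⟨j, hj⟩ := Function.ne_iff.1 hw.ne_zero
    have hsum : 0 < ∑ j, (w j : ℝ) ^ 2 := Finset.sum_pos' (fun _ _ => sq_nonneg _)
      ⟨j, Finset.mem_univ j, sq_pos_of_ne_zero (Int.cast_ne_zero.2 hj)⟩
    rwa [Fin.sum_univ_two] at hsum
  let ε : ℝ := round (t 0 * w 1 - t 1 * w 0) - (t 0 * w 1 - t 1 * w 0)
  have hε : |ε| ≤ 1 / 2 := by
    rw [abs_sub_comm]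
    exact abs_sub_round _
  let u : Fin 2 → ℝ := ![w 1, -w 0]
  have hu : ∀ j l, |u j| * |(w l : ℝ)| ≤ s := by
    have h₀ := sq_abs (w 0 : ℝ)
    have h₁ := sq_abs (w 1 : ℝ)
    simp only [u, s, Fin.forall_fin_two, Matrix.cons_val_zero, Matrix.cons_val_one, abs_neg]
    refine ⟨⟨?_, ?_⟩, ?_, ?_⟩ <;> nlinarith [sq_nonneg (|(w 0 : ℝ)| - |(w 1 : ℝ)|)]
  obtain ⟨τ, g, hX⟩ := hw.exists_eq_mul_add (X := fun j => t j + ε * u j / s)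
    (c := round (t 0 * w 1 - t 1 * w 0)) (by
      simp only [u, Matrix.cons_val_zero, Matrix.cons_val_one]
      field_simp
      simp only [ε, s]
      ring)
  refine ⟨τ, g, fun j l => ?_⟩
  rw [← hX, add_sub_cancel_left, abs_div, abs_mul, abs_of_pos hs, div_mul_eq_mul_div,
    div_le_iff₀ hs, mul_assoc]
  exact mul_le_mul hε (hu j l) (by positivity) (by norm_num)

theorem DVal_lineTorus_sub_mul_le [Nonempty (Fin n)] (hw : IsPrimitive w) (l : Fin 2) :
    (DVal (lineTorus fun i => coordForm v i w) - DVal (spanTorus v)) * |(w l : ℝ)| ≤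
      (∑ i, ∑ j, |(v j i : ℝ)|) / 2 := by
  obtain ⟨t, m, hm⟩ := DVal_spanTorus_le_iff.1 (le_refl (DVal (spanTorus v)))
  obtain ⟨τ, g, hτ⟩ := hw.exists_abs_mul_add_sub_le t
  rcases (abs_nonneg (w l : ℝ)).eq_or_lt with h0 | hpos
  · rw [← h0, mul_zero]
    positivity
  rw [← le_div_iff₀ hpos, sub_le_iff_le_add']
  refine DVal_lineTorus_le_iff_exists_abs.2 ⟨τ, fun i => m i - coordForm v i g, fun i => ?_⟩
  have hsplit : τ * coordForm v i w - ((m i - coordForm v i g : ℤ) + 1 / 2) =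
      (∑ j, t j * (v j i : ℝ) - (m i + 1 / 2)) + ∑ j, (v j i : ℝ) * (τ * w j + g j - t j) := by
    simp only [coordForm_apply, Fin.sum_univ_two]
    push_cast
    ring
  have herror : |∑ j, (v j i : ℝ) * (τ * w j + g j - t j)| ≤
      (∑ i, ∑ j, |(v j i : ℝ)|) / 2 / |(w l : ℝ)| := by
    rw [le_div_iff₀ hpos]
    calc |∑ j, (v j i : ℝ) * (τ * w j + g j - t j)| * |(w l : ℝ)|
        ≤ (∑ j, |(v j i : ℝ)| * |τ * w j + g j - t j|) * |(w l : ℝ)| := by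
          gcongr
          simpa only [abs_mul] using
            Finset.abs_sum_le_sum_abs (fun j => (v j i : ℝ) * (τ * w j + g j - t j)) _
      _ = ∑ j, |(v j i : ℝ)| * (|τ * w j + g j - t j| * |(w l : ℝ)|) := by
          simp only [Finset.sum_mul, mul_assoc]
      _ ≤ ∑ j, |(v j i : ℝ)| * (1 / 2) := by
          gcongr with j
          exact hτ j l
      _ = (∑ j, |(v j i : ℝ)|) / 2 := by rw [← Finset.sum_mul, mul_one_div]
      _ ≤ (∑ i, ∑ j, |(v j i : ℝ)|) / 2 := by
          gcongr
          exact Finset.single_le_sum (f := fun i => ∑ j, |(v j i : ℝ)|)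
            (fun i _ => by positivity) (Finset.mem_univ i)
  rw [hsplit]
  exact (abs_add_le _ _).trans (add_le_add (hm i) herror)

lemma DVal_spanTorus_le_DVal_lineTorus [Nonempty (Fin n)] (v : Fin 2 → Fin n → ℤ)
    (w : Fin 2 → ℤ) : DVal (spanTorus v) ≤ DVal (lineTorus fun i => coordForm v i w) := by
  rw [DVal_eq_infDist, DVal_eq_infDist]
  exact Metric.infDist_le_infDist_of_subset (lineTorus_coordForm_subset v w) (spanTorus_nonempty _)

lemma DVal_lineTorus_sub_mul_coordForm_le [Nonempty (Fin n)] (hw : IsPrimitive w) (i : Fin n) :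
    (DVal (lineTorus fun i => coordForm v i w) - DVal (spanTorus v)) * |(coordForm v i w : ℝ)| ≤
      (∑ i, ∑ j, |(v j i : ℝ)|) ^ 2 / 2 := by
  set Δ := DVal (lineTorus fun i => coordForm v i w) - DVal (spanTorus v)
  have hΔ : 0 ≤ Δ := sub_nonneg.2 (DVal_spanTorus_le_DVal_lineTorus v w)
  set C := ∑ i, ∑ j, |(v j i : ℝ)|
  calc Δ * |(coordForm v i w : ℝ)| ≤ Δ * ∑ l, |(v l i : ℝ)| * |(w l : ℝ)| := by
        gcongr
        rw [coordForm_apply]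
        push_cast
        simpa only [abs_mul] using Finset.abs_sum_le_sum_abs (fun l => (v l i : ℝ) * w l) _
    _ = ∑ l, |(v l i : ℝ)| * (Δ * |(w l : ℝ)|) := by
        simp only [Finset.mul_sum, mul_left_comm]
    _ ≤ ∑ l, |(v l i : ℝ)| * (C / 2) := by
        gcongr with l
        exact DVal_lineTorus_sub_mul_le hw l
    _ = (∑ l, |(v l i : ℝ)|) * (C / 2) := by rw [Finset.sum_mul]
    _ ≤ C * (C / 2) := by
        gcongr
        exact Finset.single_le_sum (f := fun i => ∑ j, |(v j i : ℝ)|)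
          (fun i _ => by positivity) (Finset.mem_univ i)
    _ = C ^ 2 / 2 := by ring

lemma exists_forall_DVal_sub_mul_le [Nonempty (Fin n)] (v : Fin 2 → Fin n → ℤ) {b : ℝ}
    (hb : 0 ≤ b) : ∃ E : ℕ, ∀ w : Fin 2 → ℤ, IsPrimitive w → ∀ i j,
      b * (DVal (lineTorus fun i => coordForm v i w) - DVal (spanTorus v)) *
        (|(coordForm v i w : ℝ)| + |(coordForm v j w : ℝ)|) ≤ E := by
  refine ⟨⌈b * (∑ i, ∑ j, |(v j i : ℝ)|) ^ 2⌉₊, fun w hw i j => le_trans ?_ (Nat.le_ceil _)⟩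
  rw [mul_assoc, mul_add]
  gcongr
  linarith [DVal_lineTorus_sub_mul_coordForm_le (v := v) hw i,
    DVal_lineTorus_sub_mul_coordForm_le (v := v) hw j]

end Density

section Chambers

open Set

variable {n : ℕ}

/-- The chamber on which the form `coordForm v i` has sign `σ i` for all `i`. -/
def chamber {k : ℕ} (v : Fin k → Fin n → ℤ) (σ : Fin n → ℤˣ) : Set (Fin k → ℤ) :=
  {w | ∀ i, 0 < ((σ i : ℤ) • coordForm v i) w}

/-- The linear form which agrees with `|coordForm v p.1| + |coordForm v p.2|` on `chamber v σ`. -/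
def weightForm {k : ℕ} (v : Fin k → Fin n → ℤ) (σ : Fin n → ℤˣ) (p : Fin n × Fin n) :
    (Fin k → ℤ) →+ ℤ :=
  (σ p.1 : ℤ) • coordForm v p.1 + (σ p.2 : ℤ) • coordForm v p.2

/-- The vectors `w` for which `DVal_lineTorus_le_iff` has a solution `(m, c)` such that the excess
of `|crossForm v m|` over `2 q` times the weight, multiplied by the denominator of `q`, is bounded
by `e`. -/
def excessRegion (v : Fin 2 → Fin n → ℤ) (σ : Fin n → ℤˣ) (q : ℚ) (e : Fin n × Fin n → ℕ) :
    Set (Fin 2 → ℤ) :=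
  {w | ∃ m ∈ centerBox v, ∃ c : ℤ, ∀ p : Fin n × Fin n,
    q.den * |crossForm v m p.1 p.2 (w, c)| ≤ 2 * q.num * weightForm v σ p w + e p}

section

variable {k : ℕ} {v : Fin k → Fin n → ℤ} {σ : Fin n → ℤˣ} {w : Fin k → ℤ}

lemma isSemilinearSet_chamber (v : Fin k → Fin n → ℤ) (σ : Fin n → ℤˣ) :
    IsSemilinearSet (chamber v σ) := by
  have h : chamber v σ =
      ⋂ i, {w | (0 : (Fin k → ℤ) →+ ℤ) w ≤ ((σ i : ℤ) • coordForm v i) w + -1} := by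
    ext w
    simp only [chamber, mem_ofPred_eq, mem_iInter, AddMonoidHom.zero_apply]
    exact forall_congr' fun i => by omega
  rw [h]
  exact .iInter fun i => isSemilinearSet_setOf_le_add _ _ _

lemma exists_mem_chamber_iff : (∃ σ, w ∈ chamber v σ) ↔ ∀ i, coordForm v i w ≠ 0 := by
  have hsign (x : ℤ) : (∃ s : ℤˣ, 0 < (s : ℤ) * x) ↔ x ≠ 0 := by
    constructor
    · rintro ⟨s, hs⟩ rfl
      simp at hs
    · intro hx
      rcases hx.lt_or_gt with h | h
      · exact ⟨-1, by simpa using h⟩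
      · exact ⟨1, by simpa using h⟩
  simp only [← hsign, Classical.skolem]
  rfl

lemma abs_coordForm_of_mem_chamber (hw : w ∈ chamber v σ) (i : Fin n) :
    |coordForm v i w| = (σ i : ℤ) * coordForm v i w := by
  have h : |(σ i : ℤ) * coordForm v i w| = σ i * coordForm v i w := abs_of_pos (hw i)
  rwa [abs_mul, Int.isUnit_iff_abs_eq.1 (σ i).isUnit, one_mul] at h

lemma weightForm_of_mem_chamber (hw : w ∈ chamber v σ) (p : Fin n × Fin n) :
    weightForm v σ p w = |coordForm v p.1 w| + |coordForm v p.2 w| := by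
  simp [weightForm, abs_coordForm_of_mem_chamber hw]

lemma weightForm_pos (hw : w ∈ chamber v σ) (p : Fin n × Fin n) : 0 < weightForm v σ p w :=
  add_pos (hw p.1) (hw p.2)

end

variable {v : Fin 2 → Fin n → ℤ} {σ : Fin n → ℤˣ} {w : Fin 2 → ℤ} {q : ℚ}

lemma isSemilinearSet_excessRegion (v : Fin 2 → Fin n → ℤ) (σ : Fin n → ℤˣ) (q : ℚ)
    (e : Fin n × Fin n → ℕ) : IsSemilinearSet (excessRegion v σ q e) := by
  let N (m : Fin n → ℤ) (p : Fin n × Fin n) : (Fin 2 → ℤ) × ℤ →+ ℤ :=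
    q.den • crossForm v m p.1 p.2
  let W (p : Fin n × Fin n) : (Fin 2 → ℤ) × ℤ →+ ℤ :=
    (2 * q.num) • (weightForm v σ p).comp (AddMonoidHom.fst _ _)
  have h : excessRegion v σ q e = ⋃ m ∈ centerBox v, AddMonoidHom.fst (Fin 2 → ℤ) ℤ ''
      ⋂ p, {x | N m p x ≤ W p x + e p} ∩ {x | (-N m p) x ≤ W p x + e p} := by
    ext w
    simp [excessRegion, N, W, ← abs_le', abs_mul]
  rw [h]
  refine .biUnion (finite_Icc _ _) fun m _ => .image (.iInter fun p => ?_) _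
  exact (isSemilinearSet_setOf_le_add _ _ _).inter (isSemilinearSet_setOf_le_add _ _ _)

variable [Nonempty (Fin n)]

lemma mul_DVal_sub_le_iff_exists (hprim : IsPrimitive w) (hw : w ∈ chamber v σ) {t : ℝ} :
    (2 * q.den * (DVal (lineTorus fun i => coordForm v i w) - q) : ℝ) ≤ t ↔
      ∃ m ∈ centerBox v, ∃ c : ℤ, ∀ p : Fin n × Fin n,
        (q.den * |crossForm v m p.1 p.2 (w, c)| - 2 * q.num * weightForm v σ p w : ℤ) ≤
          t * weightForm v σ p w := by
  have hden : (0 : ℝ) < q.den := mod_cast q.pos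
  rw [← le_div_iff₀' (by positivity), sub_le_iff_le_add',
    DVal_lineTorus_le_iff hprim (exists_mem_chamber_iff.1 ⟨σ, hw⟩)]
  simp only [Prod.forall]
  refine exists_congr fun m => and_congr_right fun _ => exists_congr fun c =>
    forall₂_congr fun i j => ?_
  have hweight : (weightForm v σ (i, j) w : ℝ) =
      |(coordForm v i w : ℝ)| + |(coordForm v j w : ℝ)| :=
    mod_cast weightForm_of_mem_chamber hw (i, j)
  have hcoeff : q.den * (2 * (q + t / (2 * q.den))) = 2 * q.num + t := by
    have hnum : (q.den * q : ℝ) = q.num := mod_cast q.den_mul_eq_num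
    rw [← hnum]
    field_simp
  rw [← hweight, ← mul_le_mul_iff_right₀ hden, ← mul_assoc, hcoeff, add_mul, ← sub_le_iff_le_add']
  push_cast
  rfl

lemma mul_DVal_sub_le_iff (hq : (q : ℝ) = DVal (spanTorus v)) {E : ℕ}
    (hE : ∀ i j, 2 * q.den * (DVal (lineTorus fun i => coordForm v i w) - DVal (spanTorus v)) *
        (|(coordForm v i w : ℝ)| + |(coordForm v j w : ℝ)|) ≤ E)
    (hprim : IsPrimitive w) (hw : w ∈ chamber v σ) (t : ℝ) :
    2 * q.den * (DVal (lineTorus fun i => coordForm v i w) - q) ≤ t ↔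
      ∃ k : Fin n × Fin n → Fin (E + 1), w ∈ excessRegion v σ q (fun p => k p) ∧
        ∀ p, ((k p : ℕ) : ℝ) ≤ t * weightForm v σ p w := by
  have hweight (p : Fin n × Fin n) :
      (weightForm v σ p w : ℝ) = |(coordForm v p.1 w : ℝ)| + |(coordForm v p.2 w : ℝ)| :=
    mod_cast weightForm_of_mem_chamber hw p
  have hpos (p : Fin n × Fin n) : (0 : ℝ) < weightForm v σ p w := mod_cast weightForm_pos hw p
  set δ := 2 * q.den * (DVal (lineTorus fun i => coordForm v i w) - q) with hδ
  have hδ0 : 0 ≤ δ := mul_nonneg (by positivity)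
    (sub_nonneg.2 (hq ▸ DVal_spanTorus_le_DVal_lineTorus v w))
  constructor
  · intro ht
    obtain ⟨m, hm, c, hc⟩ := (mul_DVal_sub_le_iff_exists hprim hw).1 hδ.ge
    let x (p : Fin n × Fin n) : ℤ :=
      q.den * |crossForm v m p.1 p.2 (w, c)| - 2 * q.num * weightForm v σ p w
    have hx (p : Fin n × Fin n) : ((x p).toNat : ℝ) ≤ δ * weightForm v σ p w := by
      rw [← Int.cast_natCast, Int.toNat_eq_max, Int.cast_max, Int.cast_zero]
      exact max_le (hc p) (mul_nonneg hδ0 (hpos p).le)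
    have hxE (p : Fin n × Fin n) : (x p).toNat ≤ E := by
      have := (hx p).trans (hweight p ▸ hq.symm ▸ hE p.1 p.2)
      exact_mod_cast this
    refine ⟨fun p => ⟨(x p).toNat, Nat.lt_succ_of_le (hxE p)⟩, ⟨m, hm, c, fun p => ?_⟩,
      fun p => (hx p).trans (mul_le_mul_of_nonneg_right ht (hpos p).le)⟩
    exact sub_le_iff_le_add'.1 (Int.self_le_toNat (x p))
  · rintro ⟨k, ⟨m, hm, c, hc⟩, hk⟩
    refine (mul_DVal_sub_le_iff_exists hprim hw).2 ⟨m, hm, c, fun p => le_trans ?_ (hk p)⟩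
    exact_mod_cast sub_le_iff_le_add'.2 (hc p)

theorem isAlmostProgUnion_relSpec1_spanTorus (v : Fin 2 → Fin n → ℤ) :
    IsAlmostProgUnion (DVal (spanTorus v)) (relSpec1 (spanTorus v)) := by
  have hcover : {w | IsPrimitive w ∧ ∀ i, coordForm v i w ≠ 0} =
      ⋃ σ, {w ∈ chamber v σ | IsPrimitive w} := by
    ext w
    simp [← exists_mem_chamber_iff, and_comm]
  rw [relSpec1_spanTorus, hcover, image_iUnion]
  refine .iUnion fun σ => ?_
  obtain ⟨q, hq⟩ := exists_ratCast_eq_DVal_spanTorus v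
  obtain ⟨E, hE⟩ := exists_forall_DVal_sub_mul_le v (b := 2 * q.den) (by positivity)
  convert IsAlmostProgUnion.image_of_minMax (DVal (spanTorus v))
    (b := 2 * q.den) (κ := Fin n × Fin n → Fin (E + 1))
    (isSemilinearSet_chamber v σ) (fun k => isSemilinearSet_excessRegion v σ q fun p => k p)
    (fun w hw => weightForm_pos hw)
    (fun w hw hprim => mul_DVal_sub_le_iff hq (hE w hprim) hprim hw) (by positivity [q.pos]) using 1
  refine image_congr fun w _ => ?_
  have := q.den_ne_zero
  push_cast
  rw [hq]
  field_simp
  ring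

end Chambers

/-- **Theorem (structure of relative spectra of 2-dimensional subtori).** -/
theorem stmt0 (n : ℕ) (hn : 2 ≤ n) (U : Set (Torus n))
    (hU : IsSubtorus 2 U) (hUproper : IsProperSub U) :
    ∃ (N : ℕ) (α β : Fin N → ℚ),
      (∀ i, 0 < α i) ∧ (∀ i, 0 < β i) ∧
      (symmDiff (relSpec1 U) (⋃ i : Fin N, progSet (DVal U) (α i) (β i))).Finite := by
  have : Nonempty (Fin n) := ⟨⟨0, by omega⟩⟩
  obtain ⟨v, -, rfl⟩ := hU
  exact (isAlmostProgUnion_relSpec1_spanTorus v).exists_fin
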